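/- If a bijective continuous map f of the unit sphere bundle 𝒬 = ℂ^{n−m} × S^{2m+1} ⊂ ℂ^{n+1} (with m ≥ 1) extends holomorphically to a neighborhood of 𝒬 in ℂ^{n+1} and preserves 𝒬, and if moreover the Levi form of S^{2m+1} is positive definite, then f extends to a holomorphic automorphism of the domain ℬ = ℂ^{n−m} × B^{m+1}. -/

import Mathlib

open Complex

/-- `𝒬 = {∑_{j≤m}|z_j|² + |w|² = 1} ≅ ℂ^{n−m} × S^{2m+1}`. -/
def Qset (n m : ℕ) : Set ((Fin n → ℂ) × ℂ) :=
  {p | (∑ j : Fin n, if (j : ℕ) < m then ‖p.1 j‖ ^ 2 else 0) + ‖p.2‖ ^ 2 = 1}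

/-- `ℬ = {∑_{j≤m}|z_j|² + |w|² < 1} ≅ ℂ^{n−m} × B^{m+1}`. -/
def Bset (n m : ℕ) : Set ((Fin n → ℂ) × ℂ) :=
  {p | (∑ j : Fin n, if (j : ℕ) < m then ‖p.1 j‖ ^ 2 else 0) + ‖p.2‖ ^ 2 < 1}


section HoloBasics
open Metric Set Filter Topology MeasureTheory

variable {X : Type*} [NormedAddCommGroup X] [NormedSpace ℂ X] [FiniteDimensional ℂ X]
variable {V : Type*} [NormedAddCommGroup V] [NormedSpace ℂ V]

theorem holo_fderiv_continuousOn {f : X → V} {U : Set X} (hU : IsOpen U)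
    (hf : DifferentiableOn ℂ f U) : ContinuousOn (fderiv ℂ f) U := by
  have : ProperSpace X := FiniteDimensional.proper ℂ X
  intro c hc
  obtain ⟨R, hR, hRU⟩ := Metric.isOpen_iff.1 hU c hc
  set r := R / 3 with hr
  have hr0 : 0 < r := by positivity
  have hK : IsCompact (closedBall c (2 * r)) := isCompact_closedBall _ _
  have hKU : closedBall c (2 * r) ⊆ U := (closedBall_subset_ball (by linarith)).trans hRU
  have huc := hK.uniformContinuousOn_of_continuous (hf.continuousOn.mono hKU)
  apply ContinuousAt.continuousWithinAt
  rw [Metric.continuousAt_iff]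
  intro ε hε
  rw [Metric.uniformContinuousOn_iff] at huc
  obtain ⟨δ, hδ, H⟩ := huc (ε * r / 4) (by positivity)
  refine ⟨min δ r, lt_min hδ hr0, fun {y} hy => ?_⟩
  have hyδ : dist y c < δ := hy.trans_le (min_le_left _ _)
  have hyr : dist y c < r := hy.trans_le (min_le_right _ _)
  have hd1 : ∀ x ∈ ball c r, x + (y - c) ∈ closedBall c (2 * r) := by
    intro x hx
    rw [mem_closedBall, dist_eq_norm]
    rw [mem_ball, dist_eq_norm] at hx
    rw [dist_eq_norm] at hyr
    calc ‖x + (y - c) - c‖ = ‖(x - c) + (y - c)‖ := by congr 1; abel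
      _ ≤ ‖x - c‖ + ‖y - c‖ := norm_add_le _ _
      _ ≤ 2 * r := by linarith
  have hd2 : ∀ x ∈ ball c r, x ∈ closedBall c (2 * r) := fun x hx =>
    closedBall_subset_closedBall (by linarith) (ball_subset_closedBall hx)
  have hda : ∀ x ∈ ball c r, HasFDerivAt (fun x => f (x + (y - c)) - f x)
      (fderiv ℂ f (x + (y - c)) - fderiv ℂ f x) x := by
    intro x hx
    have h1 := (hf.differentiableAt (hU.mem_nhds (hKU (hd1 x hx)))).hasFDerivAt
    have h2 := (hf.differentiableAt (hU.mem_nhds (hKU (hd2 x hx)))).hasFDerivAt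
    have h3 : HasFDerivAt (fun x => f (x + (y - c))) (fderiv ℂ f (x + (y - c))) x := by
      exact h1.comp x ((hasFDerivAt_id x).add_const (y - c))
    exact h3.sub h2
  have hb : ∀ x ∈ ball c r, ‖f (x + (y - c)) - f x‖ < ε * r / 4 := by
    intro x hx
    rw [← dist_eq_norm]
    apply H _ (hd1 x hx) _ (hd2 x hx)
    rw [dist_eq_norm] at hyδ ⊢
    simpa using hyδ
  have key := Complex.norm_fderiv_le_div_of_mapsTo_ball (c := c) (R₁ := r) (R₂ := ε * r / 2)
    (f := fun x => f (x + (y - c)) - f x)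
    (fun x hx => (hda x hx).differentiableAt.differentiableWithinAt) ?_ hr0
  · rw [(hda c (mem_ball_self hr0)).fderiv] at key
    rw [dist_eq_norm]
    simp only [add_sub_cancel] at key
    have : ε * r / 2 / r = ε / 2 := by field_simp
    linarith
  · intro x hx
    rw [mem_closedBall, dist_eq_norm]
    have h1 := hb x hx
    have h2 := hb c (mem_ball_self hr0)
    calc _ ≤ ‖f (x + (y - c)) - f x‖ + ‖f (c + (y - c)) - f c‖ := norm_sub_le _ _
      _ ≤ _ := by linarith

theorem holo_contDiffAt {f : X → V} {U : Set X} (hU : IsOpen U)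
    (hf : DifferentiableOn ℂ f U) {x : X} (hx : x ∈ U) : ContDiffAt ℂ 1 f x := by
  have h : ContDiffOn ℂ 1 f U := by
    rw [show (1 : WithTop ℕ∞) = 0 + 1 by simp, contDiffOn_succ_iff_fderiv_of_isOpen hU]
    exact ⟨hf, by simp, contDiffOn_zero.2 (holo_fderiv_continuousOn hU hf)⟩
  exact h.contDiffAt (hU.mem_nhds hx)

theorem holo_hasStrict {f : X → V} {U : Set X} (hU : IsOpen U)
    (hf : DifferentiableOn ℂ f U) {x : X} (hx : x ∈ U) :
    HasStrictFDerivAt f (fderiv ℂ f x) x :=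
  (holo_contDiffAt hU hf hx).hasStrictFDerivAt one_ne_zero

theorem param_circle [CompleteSpace V] {K : X × ℂ → V} {W : Set (X × ℂ)} (hW : IsOpen W)
    (hK : DifferentiableOn ℂ K W) {x₀ : X} {c : ℂ} {R : ℝ} (hR : 0 ≤ R)
    (h : ∀ z ∈ sphere c R, (x₀, z) ∈ W) :
    DifferentiableAt ℂ (fun x => ∮ z in C(c, R), K (x, z)) x₀ := by
  have : ProperSpace X := FiniteDimensional.proper ℂ X
  have hS : IsCompact (sphere c R) := isCompact_sphere _ _
  obtain ⟨u, v, hu, hv, hxu, hsv, huv⟩ := generalized_tube_lemma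
    (isCompact_singleton (x := x₀)) hS hW (by
      rintro ⟨x, z⟩ ⟨hx, hz⟩
      rw [mem_singleton_iff] at hx
      subst hx
      exact h z hz)
  obtain ⟨ε, hε, hεu⟩ := Metric.isOpen_iff.1 hu x₀ (hxu rfl)
  have hcpt : IsCompact (closedBall x₀ (ε / 2) ×ˢ sphere c R) :=
    (isCompact_closedBall _ _).prod hS
  have hsub : closedBall x₀ (ε / 2) ×ˢ sphere c R ⊆ W := by
    rintro ⟨x, z⟩ ⟨hx, hz⟩
    exact huv ⟨hεu (closedBall_subset_ball (by linarith) hx), hsv hz⟩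
  have hcont := holo_fderiv_continuousOn hW hK
  obtain ⟨M, hM⟩ := hcpt.exists_bound_of_continuousOn (hcont.mono hsub)
  have hmem : ∀ x ∈ ball x₀ (ε / 2), ∀ θ, (x, circleMap c R θ) ∈ W := fun x hx θ =>
    hsub ⟨ball_subset_closedBall hx, circleMap_mem_sphere c hR θ⟩
  have hFc : ∀ x ∈ ball x₀ (ε / 2), Continuous
      (fun θ => deriv (circleMap c R) θ • K (x, circleMap c R θ)) := by
    intro x hx
    have h1 : Continuous (fun θ => K (x, circleMap c R θ)) :=
      hK.continuousOn.comp_continuous (by fun_prop) (hmem x hx)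
    simp only [deriv_circleMap]
    exact ((continuous_circleMap 0 R).mul continuous_const).smul h1
  have hx0 : x₀ ∈ ball x₀ (ε / 2) := mem_ball_self (by positivity)
  have key := intervalIntegral.hasFDerivAt_integral_of_dominated_of_fderiv_le
    (μ := volume) (a := 0) (b := 2 * Real.pi) (𝕜 := ℂ) (x₀ := x₀) (s := ball x₀ (ε / 2))
    (F := fun x θ => deriv (circleMap c R) θ • K (x, circleMap c R θ))
    (F' := fun x θ => deriv (circleMap c R) θ •
      ((fderiv ℂ K (x, circleMap c R θ)).comp (ContinuousLinearMap.inl ℂ X ℂ)))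
    (bound := fun _ => |R| * (M * ‖ContinuousLinearMap.inl ℂ X ℂ‖))
    (ball_mem_nhds _ (by positivity)) ?_ ?_ ?_ ?_ ?_ ?_
  · exact key.differentiableAt
  · filter_upwards [ball_mem_nhds x₀ (by positivity : 0 < ε / 2)] with x hx
    exact (hFc x hx).aestronglyMeasurable
  · exact (hFc x₀ hx0).intervalIntegrable _ _
  · have h1 : Continuous (fun θ => fderiv ℂ K (x₀, circleMap c R θ)) :=
      hcont.comp_continuous (by fun_prop) (hmem x₀ hx0)
    have : Continuous (fun θ => deriv (circleMap c R) θ •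
      ((fderiv ℂ K (x₀, circleMap c R θ)).comp (ContinuousLinearMap.inl ℂ X ℂ))) := by
      simp only [deriv_circleMap]
      fun_prop
    exact this.aestronglyMeasurable
  · refine Eventually.of_forall fun θ _ x hx => ?_
    rw [norm_smul, deriv_circleMap]
    have h1 := hM (x, circleMap c R θ) ⟨ball_subset_closedBall hx, circleMap_mem_sphere c hR θ⟩
    have h2 : ‖circleMap 0 R θ * I‖ = |R| := by simp
    rw [h2]
    gcongr
    exact (ContinuousLinearMap.opNorm_comp_le _ _).trans (by gcongr)
  · exact intervalIntegrable_const
  · refine Eventually.of_forall fun θ _ x hx => ?_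
    have h1 := (hK.differentiableAt (hW.mem_nhds (hmem x hx θ))).hasFDerivAt
    have h2 : HasFDerivAt (fun x : X => (x, circleMap c R θ)) (ContinuousLinearMap.inl ℂ X ℂ) x :=
      hasFDerivAt_prodMk_left x _
    exact (h1.comp x h2).const_smul _

theorem holo_dirderiv [CompleteSpace V] {f : X → V} {U : Set X} (hU : IsOpen U)
    (hf : DifferentiableOn ℂ f U) (v : X) : DifferentiableOn ℂ (fun x => fderiv ℂ f x v) U := by
  intro x₀ hx₀
  apply DifferentiableAt.differentiableWithinAt
  obtain ⟨R, hR, hRU⟩ := Metric.isOpen_iff.1 hU x₀ hx₀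
  obtain ⟨r, hr, hrR⟩ : ∃ r : ℝ, 0 < r ∧ r * ‖v‖ < R / 2 := by
    refine ⟨R / (4 * (‖v‖ + 1)), by positivity, ?_⟩
    rw [div_mul_eq_mul_div, div_lt_div_iff₀ (by positivity) (by positivity)]
    nlinarith [norm_nonneg v]
  set W : Set (X × ℂ) := {p | p.2 ≠ 0} ∩ (fun p : X × ℂ => p.1 + p.2 • v) ⁻¹' U with hWdef
  have hW : IsOpen W := by
    apply IsOpen.inter
    · exact isOpen_ne_fun continuous_snd continuous_const
    · exact hU.preimage (by fun_prop)
  have hK : DifferentiableOn ℂ (fun p : X × ℂ => ((p.2 - 0) ^ 2)⁻¹ • f (p.1 + p.2 • v)) W := by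
    intro p hp
    apply DifferentiableAt.differentiableWithinAt
    have h1 : DifferentiableAt ℂ (fun p : X × ℂ => f (p.1 + p.2 • v)) p := by
      apply DifferentiableAt.comp (g := f) p (hf.differentiableAt (hU.mem_nhds hp.2))
      fun_prop
    have h2 : DifferentiableAt ℂ (fun p : X × ℂ => ((p.2 - 0) ^ 2)⁻¹) p := by
      apply DifferentiableAt.inv
      · fun_prop
      · simpa using hp.1
    exact h2.smul h1
  have hin : ∀ x ∈ ball x₀ (R / 2), ∀ τ ∈ closedBall (0 : ℂ) r, x + τ • v ∈ U := by
    intro x hx τ hτ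
    apply hRU
    rw [mem_ball, dist_eq_norm] at *
    rw [mem_closedBall, dist_eq_norm, sub_zero] at hτ
    calc ‖x + τ • v - x₀‖ = ‖(x - x₀) + τ • v‖ := by congr 1; abel
      _ ≤ ‖x - x₀‖ + ‖τ • v‖ := norm_add_le _ _
      _ ≤ ‖x - x₀‖ + r * ‖v‖ := by rw [norm_smul]; gcongr
      _ < R := by linarith
  have hp := param_circle hW hK (x₀ := x₀) (c := 0) (R := r) hr.le (by
    intro z hz
    refine ⟨?_, hin x₀ (mem_ball_self (by positivity)) z (sphere_subset_closedBall hz)⟩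
    rintro (h0 : z = 0)
    rw [h0] at hz
    simp at hz
    linarith)
  have hp2 := hp.const_smul ((2 * Real.pi * I : ℂ)⁻¹)
  refine hp2.congr_of_eventuallyEq ?_
  filter_upwards [ball_mem_nhds x₀ (by positivity : 0 < R / 2)] with x hx
  set O : Set ℂ := (fun τ : ℂ => x + τ • v) ⁻¹' U with hO
  have hOo : IsOpen O := hU.preimage (by fun_prop)
  have hd : DifferentiableOn ℂ (fun τ : ℂ => f (x + τ • v)) O := by
    intro τ hτ
    apply DifferentiableAt.differentiableWithinAt
    apply DifferentiableAt.comp (g := f) τ (hf.differentiableAt (hU.mem_nhds hτ))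
    fun_prop
  have := Complex.two_pi_I_inv_smul_circleIntegral_sub_sq_inv_smul_of_differentiable hOo
    (c := 0) (w₀ := 0) (R := r) (fun τ hτ => hin x hx τ hτ) hd (mem_ball_self hr)
  simp only [Pi.smul_apply]
  rw [this]
  have hxU : x ∈ U := by simpa using hin x hx 0 (mem_closedBall_self hr.le)
  have h1 : HasDerivAt (fun τ : ℂ => x + τ • v) v 0 := by
    simpa using ((hasDerivAt_id (0 : ℂ)).smul_const v).const_add x
  have h2 : HasFDerivAt f (fderiv ℂ f x) (x + (0 : ℂ) • v) := by
    simpa using (hf.differentiableAt (hU.mem_nhds hxU)).hasFDerivAt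
  exact ((h2.comp_hasDerivAt (0 : ℂ) h1).deriv).symm

end HoloBasics

section HoloIdentity
open Metric Set Filter Topology

variable {X : Type*} [NormedAddCommGroup X] [NormedSpace ℂ X]
variable {V : Type*} [NormedAddCommGroup V] [NormedSpace ℂ V]

theorem holo_identity [CompleteSpace V] {f g : X → V} {C : Set X} (hC : IsOpen C)
    (hconv : Convex ℝ C)
    (hf : DifferentiableOn ℂ f C) (hg : DifferentiableOn ℂ g C) {c : X} (hc : c ∈ C)
    (h : f =ᶠ[𝓝 c] g) : EqOn f g C := by
  intro x hx
  set L : ℂ → X := fun τ => c + τ • (x - c) with hL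
  have hLd : Differentiable ℂ L := by
    intro τ; simp only [hL]; fun_prop
  have hLc : Continuous L := hLd.continuous
  set O : Set ℂ := L ⁻¹' C with hO
  have hOo : IsOpen O := hC.preimage hLc
  have hOc : Convex ℝ O := by
    intro a ha b hb s t hs ht hst
    have := hconv ha hb hs ht hst
    have e : L (s • a + t • b) = s • L a + t • L b := by
      simp only [hL, smul_add, add_smul, smul_assoc]
      have : s • c + t • c = c := by rw [← add_smul, hst, one_smul]
      rw [add_add_add_comm, this]
    show L _ ∈ C
    rw [e]; exact this
  have hfa : AnalyticOnNhd ℂ (f ∘ L) O :=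
    (hf.comp hLd.differentiableOn (fun _ h => h)).analyticOnNhd hOo
  have hga : AnalyticOnNhd ℂ (g ∘ L) O :=
    (hg.comp hLd.differentiableOn (fun _ h => h)).analyticOnNhd hOo
  have h0 : (0 : ℂ) ∈ O := by simpa [hO, hL] using hc
  have h1 : (1 : ℂ) ∈ O := by simpa [hO, hL] using hx
  have hev : f ∘ L =ᶠ[𝓝 0] g ∘ L := by
    have : Tendsto L (𝓝 0) (𝓝 c) := by
      have := hLc.tendsto 0
      simpa [hL] using this
    exact this.eventually h
  have := hfa.eqOn_of_preconnected_of_eventuallyEq hga hOc.isPreconnected h0 hev h1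
  simpa [hL] using this

end HoloIdentity



section OsgoodOne
open Metric Set Filter Topology

theorem osgood_one {f : ℂ → ℂ} {U : Set ℂ} (hU : IsOpen U) (hf : DifferentiableOn ℂ f U)
    (hinj : InjOn f U) {p : ℂ} (hp : p ∈ U) : deriv f p ≠ 0 := by
  intro h0
  have hfa : AnalyticOnNhd ℂ f U := hf.analyticOnNhd hU
  have hda : AnalyticAt ℂ (deriv f) p := (hfa p hp).deriv
  have hnc : ∀ r > 0, ¬ (∃ w, ∀ z ∈ ball p r ∩ U, f z = w) := by
    rintro r hr ⟨w, hw⟩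
    obtain ⟨s, hs, hsU⟩ := Metric.isOpen_iff.1 (isOpen_ball.inter hU) p ⟨mem_ball_self hr, hp⟩
    have h1 : p + (s / 2 : ℝ) ∈ ball p s := by
      rw [mem_ball, dist_eq_norm]; simp [abs_of_pos hs]; linarith
    have h2 := hinj (hsU h1).2 hp ((hw _ (hsU h1)).trans (hw _ (hsU (mem_ball_self hs))).symm)
    have h3 : ((s / 2 : ℝ) : ℂ) = 0 := by simpa using h2
    have h4 : s / 2 = 0 := by exact_mod_cast h3
    linarith
  rcases hda.eventually_eq_zero_or_eventually_ne_zero with hz | hz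
  · obtain ⟨r, hr, hball⟩ := Metric.eventually_nhds_iff_ball.1 (hz.and (hU.eventually_mem hp))
    apply hnc r hr
    refine ⟨f p, fun z hz => ?_⟩
    refine (convex_ball p r).is_const_of_fderivWithin_eq_zero (𝕜 := ℂ) (f := f)
      (fun x hx => (hf.differentiableAt (hU.mem_nhds (hball x hx).2)).differentiableWithinAt)
      ?_ hz.1 (mem_ball_self hr)
    intro x hx
    rw [fderivWithin_of_isOpen isOpen_ball hx]
    ext
    simpa using (hball x hx).1
  · rw [eventually_nhdsWithin_iff] at hz
    obtain ⟨r, hr, hball⟩ := Metric.eventually_nhds_iff_ball.1 (hz.and (hU.eventually_mem hp))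
    set D := ball p r with hD
    have hDU : D ⊆ U := fun x hx => (hball x hx).2
    have hDo : IsOpen D := isOpen_ball
    have hDinj : InjOn f D := hinj.mono hDU
    have hpD : p ∈ D := mem_ball_self hr
    rcases (hfa.mono hDU).is_constant_or_isOpen (convex_ball p r).isPreconnected with hc | ho
    · obtain ⟨w, hw⟩ := hc
      exact hnc r hr ⟨w, fun z hz => hw z hz.1⟩
    set h := Function.invFunOn f D with hh
    have hli : ∀ x ∈ D, h (f x) = x := fun x hx => hDinj.leftInvOn_invFunOn hx
    have hΓ : IsOpen (f '' D) := ho D subset_rfl hDo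
    have hcont : ∀ x ∈ D, ContinuousAt h (f x) := by
      intro x hx
      unfold ContinuousAt
      rw [hli x hx]
      intro s hs
      obtain ⟨t, hts, hto, hxt⟩ := _root_.mem_nhds_iff.1 (inter_mem hs (hDo.mem_nhds hx))
      have := (ho t (hts.trans inter_subset_right) hto).mem_nhds (mem_image_of_mem f hxt)
      rw [mem_map]
      refine mem_of_superset this ?_
      rintro _ ⟨y, hy, rfl⟩
      show h (f y) ∈ s
      rw [hli y (hts hy).2]
      exact (hts hy).1
    have hdiff : DifferentiableOn ℂ h (f '' D \ {f p}) := by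
      rintro _ ⟨⟨x, hx, rfl⟩, hne⟩
      have hxp : x ≠ p := fun e => hne (by rw [e]; rfl)
      have hd : HasDerivAt f (deriv f x) (h (f x)) := by
        rw [hli x hx]
        exact (hf.differentiableAt (hU.mem_nhds (hDU hx))).hasDerivAt
      refine (HasDerivAt.of_local_left_inverse (hcont x hx) hd ((hball x hx).1 hxp)
        ?_).differentiableAt.differentiableWithinAt
      filter_upwards [hΓ.mem_nhds (mem_image_of_mem f hx)]
      rintro _ ⟨y, hy, rfl⟩
      rw [hli y hy]
    have hG : f '' D ∈ 𝓝 (f p) := hΓ.mem_nhds (mem_image_of_mem f hpD)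
    have hd2 := (Complex.differentiableOn_compl_singleton_and_continuousAt_iff hG).1
      ⟨hdiff, hcont p hpD⟩
    have hd3 : HasDerivAt h (deriv h (f p)) (f p) := (hd2.differentiableAt hG).hasDerivAt
    have hd4 : HasDerivAt f 0 p := by
      rw [← h0]; exact (hf.differentiableAt (hU.mem_nhds hp)).hasDerivAt
    have hd5 := hd3.comp p hd4
    have hd6 : HasDerivAt (h ∘ f) 1 p := by
      refine (hasDerivAt_id p).congr_of_eventuallyEq ?_
      filter_upwards [hDo.mem_nhds hpD] with x hx
      exact hli x hx
    have := hd5.unique hd6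
    simp at this

end OsgoodOne

section OsgoodCurve
open Metric Set Filter Topology

variable {X : Type*} [NormedAddCommGroup X] [NormedSpace ℂ X] [FiniteDimensional ℂ X]
variable {V : Type*} [NormedAddCommGroup V] [NormedSpace ℂ V]

/-- iterated directional derivative -/
noncomputable def iterDir (J : X → ℂ) (v : X) : ℕ → X → ℂ
  | 0 => J
  | (j + 1) => fun x => fderiv ℂ (iterDir J v j) x v

theorem iterDir_diff {J : X → ℂ} {U : Set X} (hU : IsOpen U) (hJ : DifferentiableOn ℂ J U)
    (v : X) (j : ℕ) : DifferentiableOn ℂ (iterDir J v j) U := by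
  induction j with
  | zero => exact hJ
  | succ j ih => exact holo_dirderiv hU ih v

theorem iterDir_slice {J : X → ℂ} {U : Set X} (hU : IsOpen U) (hJ : DifferentiableOn ℂ J U)
    (v x : X) (j : ℕ) : ∀ τ : ℂ, x + τ • v ∈ U →
      iteratedDeriv j (fun τ : ℂ => J (x + τ • v)) τ = iterDir J v j (x + τ • v) := by
  induction j with
  | zero => intro τ _; simp [iterDir]
  | succ j ih =>
    intro τ hτ
    rw [iteratedDeriv_succ]
    have hO : IsOpen ((fun τ : ℂ => x + τ • v) ⁻¹' U) := hU.preimage (by fun_prop)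
    have hev : iteratedDeriv j (fun τ : ℂ => J (x + τ • v)) =ᶠ[𝓝 τ]
        fun τ => iterDir J v j (x + τ • v) := by
      filter_upwards [hO.mem_nhds hτ] with σ hσ
      exact ih σ hσ
    rw [hev.deriv_eq]
    have h1 : HasDerivAt (fun τ : ℂ => x + τ • v) v τ := by
      simpa using ((hasDerivAt_id τ).smul_const v).const_add x
    have h2 := ((iterDir_diff hU hJ v j).differentiableAt (hU.mem_nhds hτ)).hasFDerivAt
    exact (h2.comp_hasDerivAt τ h1).deriv

theorem hurwitz_zero {J : X → ℂ} {U : Set X} (hU : IsOpen U) (hJ : DifferentiableOn ℂ J U)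
    {q u v : X} {ε : ℝ} (hε : 0 < ε) (hεU : ∀ τ ∈ closedBall (0 : ℂ) ε, q + τ • v ∈ U)
    (hq : J q = 0) (hne : ∀ τ ∈ sphere (0 : ℂ) ε, J (q + τ • v) ≠ 0) :
    ∃ δ > 0, ∀ t ∈ ball (0 : ℂ) δ, ∃ τ ∈ ball (0 : ℂ) ε,
      q + t • u + τ • v ∈ U ∧ J (q + t • u + τ • v) = 0 := by
  obtain ⟨m, hm, hmb⟩ : ∃ m > 0, ∀ τ ∈ sphere (0 : ℂ) ε, m ≤ ‖J (q + τ • v)‖ := by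
    have hc : ContinuousOn (fun τ : ℂ => ‖J (q + τ • v)‖) (sphere (0 : ℂ) ε) := by
      apply ContinuousOn.norm
      exact hJ.continuousOn.comp (by fun_prop) (fun τ hτ => hεU τ (sphere_subset_closedBall hτ))
    obtain ⟨τ₀, hτ₀, hmin⟩ := (isCompact_sphere (0 : ℂ) ε).exists_isMinOn
      (NormedSpace.sphere_nonempty.2 hε.le) hc
    exact ⟨_, norm_pos_iff.2 (hne τ₀ hτ₀), fun τ hτ => hmin hτ⟩
  -- the open set of good `(t, τ)`
  set A : ℂ × ℂ → X := fun p => q + p.1 • u + p.2 • v with hA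
  have hAc : Continuous A := by simp only [hA]; fun_prop
  have hAU : IsOpen (A ⁻¹' U) := hU.preimage hAc
  have hB : IsOpen ((A ⁻¹' U) ∩ (fun p => ‖J (A p)‖) ⁻¹' Ioi (m / 2)) := by
    apply ContinuousOn.isOpen_inter_preimage _ hAU isOpen_Ioi
    exact (hJ.continuousOn.comp hAc.continuousOn (fun _ h => h)).norm
  obtain ⟨a1, b1, ha1, hb1, h0a1, hsb1, hab1⟩ := generalized_tube_lemma
    (isCompact_singleton (x := (0 : ℂ))) (isCompact_closedBall (0 : ℂ) ε) hAU (by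
      rintro ⟨x, z⟩ ⟨hx, hz⟩
      rw [mem_singleton_iff] at hx
      subst hx
      simpa [hA] using hεU z hz)
  obtain ⟨a2, b2, ha2, hb2, h0a2, hsb2, hab2⟩ := generalized_tube_lemma
    (isCompact_singleton (x := (0 : ℂ))) (isCompact_sphere (0 : ℂ) ε) hB (by
      rintro ⟨x, z⟩ ⟨hx, hz⟩
      rw [mem_singleton_iff] at hx
      subst hx
      refine ⟨by simpa [hA] using hεU z (sphere_subset_closedBall hz), ?_⟩
      have := hmb z hz
      simp only [hA, zero_smul, add_zero, mem_preimage, mem_Ioi]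
      linarith)
  have hC : IsOpen ((A ⁻¹' U) ∩ (fun p => ‖J (A p)‖) ⁻¹' Iio (m / 2)) := by
    apply ContinuousOn.isOpen_inter_preimage _ hAU isOpen_Iio
    exact (hJ.continuousOn.comp hAc.continuousOn (fun _ h => h)).norm
  have h3 : ∀ᶠ t in 𝓝 (0 : ℂ), (t, (0 : ℂ)) ∈
      ((A ⁻¹' U) ∩ (fun p => ‖J (A p)‖) ⁻¹' Iio (m / 2)) := by
    have hcc : Continuous (fun t : ℂ => (t, (0 : ℂ))) := by fun_prop
    apply hcc.continuousAt.eventually_mem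
    apply hC.mem_nhds
    refine ⟨?_, ?_⟩
    · simpa [hA] using hεU 0 (mem_closedBall_self hε.le)
    · simp [hA, hq, hm]
  obtain ⟨δ, hδ, hball⟩ := Metric.eventually_nhds_iff_ball.1
    (((ha1.eventually_mem (h0a1 rfl)).and (ha2.eventually_mem (h0a2 rfl))).and h3)
  refine ⟨δ, hδ, fun t ht => ?_⟩
  obtain ⟨⟨ht1, ht2⟩, ht3⟩ := hball t ht
  have hin : ∀ τ ∈ closedBall (0 : ℂ) ε, A (t, τ) ∈ U := fun τ hτ => hab1 ⟨ht1, hsb1 hτ⟩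
  by_contra hcon
  push Not at hcon
  have hnz : ∀ τ ∈ closedBall (0 : ℂ) ε, J (A (t, τ)) ≠ 0 := by
    intro τ hτ
    rcases (mem_closedBall.1 hτ).lt_or_eq with h | h
    · exact hcon τ (mem_ball.2 h) (hin τ hτ)
    · have := (hab2 (⟨ht2, hsb2 (mem_sphere.2 h)⟩ : (t, τ) ∈ a2 ×ˢ b2)).2
      intro h0
      simp only [mem_preimage, mem_Ioi, h0, norm_zero] at this
      linarith
  have hd : DifferentiableOn ℂ (fun τ => (J (A (t, τ)))⁻¹) (closedBall 0 ε) := by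
    intro τ hτ
    apply DifferentiableAt.differentiableWithinAt
    apply DifferentiableAt.fun_inv (h := fun τ => J (A (t, τ))) _ (hnz τ hτ)
    apply DifferentiableAt.comp (g := J) τ (hJ.differentiableAt (hU.mem_nhds (hin τ hτ)))
    simp only [hA]; fun_prop
  have hmax := Complex.norm_le_of_forall_mem_frontier_norm_le (U := ball (0 : ℂ) ε)
    (f := fun τ => (J (A (t, τ)))⁻¹) (C := 2 / m) isBounded_ball ?_ ?_
    (subset_closure (mem_ball_self hε))
  · have := ht3.2
    simp only [mem_preimage, mem_Iio] at this
    rw [norm_inv] at hmax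
    have hpos : 0 < ‖J (A (t, 0))‖ := norm_pos_iff.2 (hnz 0 (mem_closedBall_self hε.le))
    rw [inv_le_comm₀ hpos (by positivity), inv_div] at hmax
    linarith
  · apply DifferentiableOn.diffContOnCl
    rwa [closure_ball _ hε.ne']
  · intro τ hτ
    rw [frontier_ball _ hε.ne'] at hτ
    have := (hab2 (⟨ht2, hsb2 hτ⟩ : (t, τ) ∈ a2 ×ˢ b2)).2
    simp only [mem_preimage, mem_Ioi] at this
    rw [norm_inv, inv_le_comm₀ (by linarith) (by positivity), inv_div]
    exact this.le

end OsgoodCurve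



section OsgoodCurve2
open Metric Set Filter Topology

variable {X : Type*} [NormedAddCommGroup X] [NormedSpace ℂ X] [FiniteDimensional ℂ X]
variable {V : Type*} [NormedAddCommGroup V] [NormedSpace ℂ V]

theorem critical_curve {J : X → ℂ} {f : X → V} {U : Set X} (hU : IsOpen U)
    (hJ : DifferentiableOn ℂ J U) (hf : DifferentiableOn ℂ f U) (hinj : InjOn f U)
    (hdim : 2 ≤ Module.finrank ℂ X)
    (hcrit : ∀ x ∈ U, J x = 0 → fderiv ℂ f x = 0) {p : X} (hp : p ∈ U) (hJp : J p = 0)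
    (hne : ¬ ∀ᶠ x in 𝓝 p, J x = 0) : False := by
  obtain ⟨r, hr, hrU⟩ := Metric.isOpen_iff.1 hU p hp
  obtain ⟨x1, hx1, hJx1⟩ : ∃ x ∈ ball p r, J x ≠ 0 := by
    by_contra hcon
    push Not at hcon
    exact hne (Metric.eventually_nhds_iff_ball.2 ⟨r, hr, hcon⟩)
  set v := x1 - p with hv
  have hv0 : v ≠ 0 := by
    intro h
    rw [hv, sub_eq_zero] at h
    rw [h] at hJx1
    exact hJx1 hJp
  have hvn : 0 < ‖v‖ := norm_pos_iff.2 hv0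
  -- some iterated derivative is nonzero at `p`
  have hex : ∃ j, ∃ q ∈ U, J q = 0 ∧ iterDir J v j q ≠ 0 := by
    by_contra hcon
    push Not at hcon
    apply hJx1
    have hmem : ∀ τ ∈ ball (0 : ℂ) (r / ‖v‖), p + τ • v ∈ U := by
      intro τ hτ
      apply hrU
      rw [mem_ball, dist_eq_norm] at *
      rw [add_sub_cancel_left, norm_smul]
      rw [sub_zero, lt_div_iff₀ hvn] at hτ
      exact hτ
    have hd : DifferentiableOn ℂ (fun τ : ℂ => J (p + τ • v)) (ball 0 (r / ‖v‖)) := by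
      intro τ hτ
      apply DifferentiableAt.differentiableWithinAt
      apply DifferentiableAt.comp (g := J) τ (hJ.differentiableAt (hU.mem_nhds (hmem τ hτ)))
      fun_prop
    have h1 : (1 : ℂ) ∈ ball (0 : ℂ) (r / ‖v‖) := by
      rw [mem_ball, dist_eq_norm, sub_zero, norm_one, lt_div_iff₀ hvn, one_mul]
      rw [mem_ball, dist_eq_norm] at hx1
      exact hx1
    have ht := Complex.taylorSeries_eq_on_ball' h1 hd
    have h0 : ∀ n, iteratedDeriv n (fun τ : ℂ => J (p + τ • v)) 0 = 0 := by
      intro n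
      rw [iterDir_slice hU hJ v p n 0 (by simpa using hp)]
      simpa using hcon n p hp hJp
    simp only [h0] at ht
    simpa [hv] using ht.symm
  classical
  obtain ⟨q, hqU, hJq, hqne⟩ := Nat.find_spec hex
  have hmin : ∀ j < Nat.find hex, ∀ x ∈ U, J x = 0 → iterDir J v j x = 0 := by
    intro j hj x hx hJx
    have := Nat.find_min hex hj
    push Not at this
    exact this x hx hJx
  obtain ⟨ν, hν⟩ : ∃ ν, Nat.find hex = ν + 1 := by
    apply Nat.exists_eq_succ_of_ne_zero
    intro h0
    rw [h0] at hqne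
    exact hqne hJq
  set G := iterDir J v ν with hG
  have hGd : DifferentiableOn ℂ G U := iterDir_diff hU hJ v ν
  have hGz : ∀ x ∈ U, J x = 0 → G x = 0 := hmin ν (by omega)
  set α := fderiv ℂ G q v with hα
  have hα0 : α ≠ 0 := by
    have := hqne
    rw [hν] at this
    exact this
  have hαn : 0 < ‖α‖ := norm_pos_iff.2 hα0
  -- slice not locally zero
  have hsl : ∀ᶠ τ in 𝓝[≠] (0 : ℂ), J (q + τ • v) ≠ 0 := by
    have han : AnalyticAt ℂ (fun τ : ℂ => J (q + τ • v)) 0 := by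
      have hO : IsOpen ((fun τ : ℂ => q + τ • v) ⁻¹' U) := hU.preimage (by fun_prop)
      refine DifferentiableOn.analyticAt (s := (fun τ : ℂ => q + τ • v) ⁻¹' U) ?_
        (hO.mem_nhds (by simpa using hqU))
      intro τ hτ
      apply DifferentiableAt.differentiableWithinAt
      apply DifferentiableAt.comp (g := J) τ (hJ.differentiableAt (hU.mem_nhds hτ))
      fun_prop
    rcases han.eventually_eq_zero_or_eventually_ne_zero with h | h
    · exfalso
      have h1 := iterDir_slice hU hJ v q (ν + 1) 0 (by simpa using hqU)
      have h2 : (fun τ : ℂ => J (q + τ • v)) =ᶠ[𝓝 0] fun _ => 0 := h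
      rw [h2.iteratedDeriv_eq, iteratedDeriv_const] at h1
      rw [hν] at hqne
      apply hqne
      simpa using h1.symm
    · exact h
  -- strict derivative
  have hGs := holo_hasStrict hU hGd hqU
  obtain ⟨u, hu⟩ : ∃ u : X, u ∉ Submodule.span ℂ {v} := by
    by_contra hcon
    push Not at hcon
    have : Submodule.span ℂ {v} = ⊤ := Submodule.eq_top_iff'.2 hcon
    have h1 := finrank_span_singleton (K := ℂ) hv0
    rw [this, finrank_top] at h1
    omega
  set c := ‖α‖ / (2 * ‖v‖) with hc
  have hc0 : 0 < c := by positivity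
  have hst := hGs.isLittleO.def hc0
  rw [nhds_prod_eq] at hst
  obtain ⟨P1, hP1, P2, hP2, hPP⟩ := Filter.eventually_prod_iff.1 hst
  obtain ⟨ρ, hρ, hρb⟩ := Metric.eventually_nhds_iff_ball.1 ((hP1.and hP2).and (hU.eventually_mem hqU))
  -- choose ε
  obtain ⟨ε₀, hε₀, hε₀b⟩ := Metric.eventually_nhds_iff_ball.1 (eventually_nhdsWithin_iff.1 hsl)
  obtain ⟨ε, hε, hεε, hεv⟩ : ∃ ε > 0, ε < ε₀ ∧ ε * ‖v‖ < ρ / 2 := by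
    refine ⟨min (ε₀ / 2) (ρ / (4 * ‖v‖)), by positivity, ?_, ?_⟩
    · exact (min_le_left _ _).trans_lt (by linarith)
    · calc _ ≤ ρ / (4 * ‖v‖) * ‖v‖ := by gcongr; exact min_le_right _ _
        _ = ρ / 4 := by field_simp
        _ < ρ / 2 := by linarith
  have hsmall : ∀ τ ∈ closedBall (0 : ℂ) ε, ‖τ • v‖ < ρ / 2 := by
    intro τ hτ
    rw [mem_closedBall, dist_eq_norm, sub_zero] at hτ
    rw [norm_smul]
    exact lt_of_le_of_lt (by gcongr) hεv
  obtain ⟨δ₁, hδ₁, hzero⟩ := hurwitz_zero hU hJ (q := q) (u := u) (v := v) hε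
    (fun τ hτ => (hρb _ (by
      rw [mem_ball, dist_eq_norm, add_sub_cancel_left]
      have := hsmall τ hτ
      linarith)).2) hJq (by
      intro τ hτ
      have hτn : ‖τ‖ = ε := by simpa using hτ
      apply hε₀b τ (by rw [mem_ball, dist_eq_norm, sub_zero]; linarith)
      intro (h0 : τ = 0)
      rw [h0, norm_zero] at hτn
      linarith)
  set δ := min δ₁ (ρ / (2 * (‖u‖ + 1))) with hδ
  have hδ0 : 0 < δ := by positivity
  have hex2 : ∀ t : ℂ, ∃ τ : ℂ, t ∈ ball (0 : ℂ) δ → (q + t • u + τ • v ∈ ball q ρ ∧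
      J (q + t • u + τ • v) = 0) := by
    intro t
    by_cases ht : t ∈ ball (0 : ℂ) δ
    · obtain ⟨τ, hτ, -, hz⟩ := hzero t (ball_subset_ball (min_le_left _ _) ht)
      refine ⟨τ, fun _ => ⟨?_, hz⟩⟩
      rw [mem_ball, dist_eq_norm]
      have h1 := hsmall τ (ball_subset_closedBall hτ)
      have h2 : ‖t • u‖ ≤ ρ / 2 := by
        rw [norm_smul]
        rw [mem_ball, dist_eq_norm, sub_zero] at ht
        have h3 : ‖t‖ ≤ ρ / (2 * (‖u‖ + 1)) := (ht.trans_le (min_le_right _ _)).le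
        calc ‖t‖ * ‖u‖ ≤ ρ / (2 * (‖u‖ + 1)) * (‖u‖ + 1) := by gcongr; linarith
          _ = ρ / 2 := by field_simp
      calc ‖q + t • u + τ • v - q‖ = ‖t • u + τ • v‖ := by congr 1; abel
        _ ≤ ‖t • u‖ + ‖τ • v‖ := norm_add_le _ _
        _ < ρ := by linarith
    · exact ⟨0, fun h => absurd h ht⟩
  choose T hT using hex2
  set γ : ℂ → X := fun t => q + t • u + T t • v with hγ
  have hγb : ∀ t ∈ ball (0 : ℂ) δ, γ t ∈ ball q ρ := fun t ht => (hT t ht).1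
  have hγU : ∀ t ∈ ball (0 : ℂ) δ, γ t ∈ U := fun t ht => (hρb _ (hγb t ht)).2
  have hγJ : ∀ t ∈ ball (0 : ℂ) δ, J (γ t) = 0 := fun t ht => (hT t ht).2
  -- Lipschitz bound
  set M := (‖fderiv ℂ G q u‖ + c * ‖u‖) * (2 / ‖α‖) with hM
  have hlip : ∀ t ∈ ball (0 : ℂ) δ, ∀ s ∈ ball (0 : ℂ) δ, ‖T t - T s‖ ≤ M * ‖t - s‖ := by
    intro t ht s hs
    have h1 := hPP (hρb _ (hγb t ht)).1.1 (hρb _ (hγb s hs)).1.2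
    simp only at h1
    rw [hGz _ (hγU t ht) (hγJ t ht), hGz _ (hγU s hs) (hγJ s hs)] at h1
    have e : γ t - γ s = (t - s) • u + (T t - T s) • v := by
      simp only [hγ, sub_smul]; abel
    rw [e, map_add, map_smul, map_smul] at h1
    have h2 : ‖(t - s) • u + (T t - T s) • v‖ ≤ ‖t - s‖ * ‖u‖ + ‖T t - T s‖ * ‖v‖ := by
      rw [← norm_smul, ← norm_smul]; exact norm_add_le _ _
    have h3 : ‖T t - T s‖ * ‖α‖ ≤ ‖t - s‖ * ‖fderiv ℂ G q u‖ +
        c * (‖t - s‖ * ‖u‖ + ‖T t - T s‖ * ‖v‖) := by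
      calc ‖T t - T s‖ * ‖α‖ = ‖(T t - T s) • α‖ := (norm_smul _ _).symm
        _ = ‖(0 - 0 - ((t - s) • fderiv ℂ G q u + (T t - T s) • α)) + (t - s) • fderiv ℂ G q u‖ := by
          rw [← norm_neg]; congr 1; abel
        _ ≤ ‖(0 - 0 - ((t - s) • fderiv ℂ G q u + (T t - T s) • α))‖ +
            ‖(t - s) • fderiv ℂ G q u‖ := norm_add_le _ _
        _ ≤ c * (‖t - s‖ * ‖u‖ + ‖T t - T s‖ * ‖v‖) + ‖t - s‖ * ‖fderiv ℂ G q u‖ := by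
          rw [norm_smul (t - s)]
          gcongr
          exact h1.trans (by gcongr)
        _ = _ := by ring
    have h4 : c * ‖v‖ = ‖α‖ / 2 := by rw [hc]; field_simp
    have h5 : ‖T t - T s‖ * (‖α‖ / 2) ≤ (‖fderiv ℂ G q u‖ + c * ‖u‖) * ‖t - s‖ := by
      have : c * (‖t - s‖ * ‖u‖ + ‖T t - T s‖ * ‖v‖) =
        c * ‖t - s‖ * ‖u‖ + ‖T t - T s‖ * (c * ‖v‖) := by ring
      rw [this, h4] at h3
      nlinarith
    have h6 : ‖T t - T s‖ = ‖T t - T s‖ * (‖α‖ / 2) * (2 / ‖α‖) := by field_simp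
    rw [h6, hM]
    calc _ ≤ (‖fderiv ℂ G q u‖ + c * ‖u‖) * ‖t - s‖ * (2 / ‖α‖) := by gcongr
      _ = _ := by ring
  have hγlip : ∀ t ∈ ball (0 : ℂ) δ, (fun s => γ s - γ t) =O[𝓝 t] fun s => s - t := by
    intro t ht
    apply Asymptotics.IsBigO.of_bound (‖u‖ + M * ‖v‖)
    filter_upwards [isOpen_ball.mem_nhds ht] with s hs
    have e : γ s - γ t = (s - t) • u + (T s - T t) • v := by
      simp only [hγ, sub_smul]; abel
    rw [e]
    calc _ ≤ ‖s - t‖ * ‖u‖ + ‖T s - T t‖ * ‖v‖ := by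
          rw [← norm_smul, ← norm_smul]; exact norm_add_le _ _
      _ ≤ ‖s - t‖ * ‖u‖ + M * ‖s - t‖ * ‖v‖ := by gcongr; exact hlip s hs t ht
      _ = _ := by ring
  have hder : ∀ t ∈ ball (0 : ℂ) δ, HasDerivAt (fun s => f (γ s)) 0 t := by
    intro t ht
    have h1 := (hf.differentiableAt (hU.mem_nhds (hγU t ht))).hasFDerivAt
    rw [hcrit _ (hγU t ht) (hγJ t ht)] at h1
    have h2 := h1.isLittleO
    simp only [_root_.zero_apply, sub_zero] at h2
    have hcont : Tendsto γ (𝓝 t) (𝓝 (γ t)) := by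
      have h3 : Tendsto (fun s : ℂ => s - t) (𝓝 t) (𝓝 0) := by
        have : Continuous (fun s : ℂ => s - t) := by fun_prop
        simpa using this.tendsto t
      have h4 := (hγlip t ht).trans_tendsto h3
      simpa using h4.add_const (γ t)
    rw [hasDerivAt_iff_isLittleO]
    simp only [smul_zero, sub_zero]
    exact (h2.comp_tendsto hcont).trans_isBigO (hγlip t ht)
  have hconst : f (γ ((δ / 2 : ℝ) : ℂ)) = f (γ 0) := by
    refine (convex_ball (0 : ℂ) δ).is_const_of_fderivWithin_eq_zero (𝕜 := ℂ)
      (f := fun s => f (γ s))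
      (fun x hx => (hder x hx).differentiableAt.differentiableWithinAt)
      ?_ ?_ (mem_ball_self hδ0)
    · intro x hx
      rw [fderivWithin_of_isOpen isOpen_ball hx]
      ext
      simpa using (hder x hx).deriv
    · rw [mem_ball, dist_eq_norm, sub_zero, Complex.norm_real, Real.norm_of_nonneg (by positivity)]
      linarith
  have hmem : ((δ / 2 : ℝ) : ℂ) ∈ ball (0 : ℂ) δ := by
    rw [mem_ball, dist_eq_norm, sub_zero, Complex.norm_real, Real.norm_of_nonneg (by positivity)]
    linarith
  have heq := hinj (hγU _ hmem) (hγU _ (mem_ball_self hδ0)) hconst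
  set d : ℂ := ((δ / 2 : ℝ) : ℂ) with hd
  have hd0 : d ≠ 0 := by
    rw [hd]; exact_mod_cast (by positivity : δ / 2 ≠ 0)
  apply hu
  have h1 : d • u = (T 0 - T d) • v := by
    have h2 : γ d = γ 0 := heq
    simp only [hγ, zero_smul, add_assoc] at h2
    have h3 := add_left_cancel h2
    rw [zero_add] at h3
    rw [sub_smul, ← h3]; abel
  have h2 : u = (d⁻¹ * (T 0 - T d)) • v := by
    rw [mul_smul, ← h1, smul_smul, inv_mul_cancel₀ hd0, one_smul]
  rw [h2]
  exact Submodule.smul_mem _ _ (Submodule.mem_span_singleton_self v)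

end OsgoodCurve2



section OsgoodFull
open Metric Set Filter Topology

universe u1 u2

theorem holo_prod {X : Type*} [NormedAddCommGroup X] [NormedSpace ℂ X] {ι : Type*} (s : Finset ι)
    (f : ι → X → ℂ) (U : Set X) (h : ∀ i ∈ s, DifferentiableOn ℂ (f i) U) :
    DifferentiableOn ℂ (fun x => ∏ i ∈ s, f i x) U := by
  classical
  induction s using Finset.induction_on with
  | empty => simp
  | insert a s ha ih =>
    simp only [Finset.prod_insert ha]
    exact (h a (by simp)).mul (ih (fun i hi => h i (by simp [hi])))

/-- rank reduction -/
theorem osgood_rank {k : ℕ}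
    (IH : ∀ (E : Type u1) (F : Type u2) [NormedAddCommGroup E] [NormedSpace ℂ E]
      [FiniteDimensional ℂ E] [NormedAddCommGroup F] [NormedSpace ℂ F] [FiniteDimensional ℂ F]
      (_ : Module.finrank ℂ E = k) (_ : Module.finrank ℂ F = k) (f : E → F) (U : Set E)
      (_ : IsOpen U) (_ : DifferentiableOn ℂ f U) (_ : InjOn f U) (p : E) (_ : p ∈ U)
      (v : E) (_ : fderiv ℂ f p v = 0), v = 0)
    {E : Type u1} {F : Type u2} [NormedAddCommGroup E] [NormedSpace ℂ E]
    [FiniteDimensional ℂ E] [NormedAddCommGroup F] [NormedSpace ℂ F] [FiniteDimensional ℂ F]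
    (hE : Module.finrank ℂ E = k + 1) (hF : Module.finrank ℂ F = k + 1) {f : E → F} {U : Set E}
    (hU : IsOpen U) (hf : DifferentiableOn ℂ f U) (hinj : InjOn f U) {q : E} (hq : q ∈ U)
    (hne : fderiv ℂ f q ≠ 0) (v : E) (hv : fderiv ℂ f q v = 0) : v = 0 := by
  have : CompleteSpace E := FiniteDimensional.complete ℂ E
  have : CompleteSpace F := FiniteDimensional.complete ℂ F
  obtain ⟨w, hw⟩ : ∃ w, fderiv ℂ f q w ≠ 0 := by
    by_contra hcon
    push Not at hcon
    exact hne (by ext x; simpa using hcon x)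
  obtain ⟨ℓ, hℓ⟩ := SeparatingDual.exists_eq_one (R := ℂ) hw
  set A := fderiv ℂ f q with hA
  set lam : E →L[ℂ] ℂ := ℓ.comp A with hlam
  have hlw : lam w = 1 := hℓ
  set K := LinearMap.ker lam.toLinearMap with hK
  set N := LinearMap.ker ℓ.toLinearMap with hN
  have hKdim : Module.finrank ℂ K = k := by
    have h1 := lam.toLinearMap.finrank_range_add_finrank_ker
    have h2 : LinearMap.range lam.toLinearMap = ⊤ := by
      rw [LinearMap.range_eq_top]
      intro c
      exact ⟨c • w, by simp [hlw]⟩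
    rw [h2, finrank_top, Module.finrank_self, hE] at h1
    change 1 + Module.finrank ℂ K = k + 1 at h1
    omega
  have hNdim : Module.finrank ℂ N = k := by
    have h1 := ℓ.toLinearMap.finrank_range_add_finrank_ker
    have h2 : LinearMap.range ℓ.toLinearMap = ⊤ := by
      rw [LinearMap.range_eq_top]
      intro c
      exact ⟨c • A w, by simp [hℓ]⟩
    rw [h2, finrank_top, Module.finrank_self, hF] at h1
    change 1 + Module.finrank ℂ N = k + 1 at h1
    omega
  set πK : E →L[ℂ] K := (ContinuousLinearMap.id ℂ E - lam.smulRight w).codRestrict K (by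
    intro x
    simp [hK, hlw]) with hπK
  set πN : F →L[ℂ] N := (ContinuousLinearMap.id ℂ F - ℓ.smulRight (A w)).codRestrict N (by
    intro x
    simp [hN, hℓ]) with hπN
  have hπKv : ∀ x, (πK x : E) = x - lam x • w := fun x => rfl
  have hπNv : ∀ x, (πN x : F) = x - ℓ x • A w := fun x => rfl
  -- the chart
  set Ψ : E → ℂ × K := fun x => (ℓ (f x), πK x) with hΨ
  have hΨd : DifferentiableOn ℂ Ψ U := by
    intro x hx
    exact ((ℓ.differentiable.comp_differentiableOn hf) x hx).prodMk
      πK.differentiable.differentiableAt.differentiableWithinAt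
  set L : E ≃L[ℂ] ℂ × K := ContinuousLinearEquiv.equivOfInverse (lam.prod πK)
    (((ContinuousLinearMap.fst ℂ ℂ K).smulRight w) + K.subtypeL.comp (ContinuousLinearMap.snd ℂ ℂ K))
    (by intro x; simp [hπKv])
    (by
      rintro ⟨t, κ, hκ⟩
      have hκ' : lam κ = 0 := hκ
      ext
      · simp [hlw, hκ']
      · simp [hπKv, hlw, hκ']) with hL
  have hΨq : HasFDerivAt Ψ (L : E →L[ℂ] ℂ × K) q := by
    have h1 := (hf.differentiableAt (hU.mem_nhds hq)).hasFDerivAt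
    exact (ℓ.hasFDerivAt.comp q h1).prodMk πK.hasFDerivAt
  have hΨc := holo_contDiffAt hU hΨd hq
  set Φ := hΨc.toOpenPartialHomeomorph Ψ hΨq one_ne_zero with hΦ
  have hΦc : (Φ : E → ℂ × K) = Ψ := rfl
  have hqs : q ∈ Φ.source := hΨc.mem_toOpenPartialHomeomorph_source hΨq one_ne_zero
  set ψ := hΨc.localInverse hΨq one_ne_zero with hψ
  have hψΦ : ψ = Φ.symm := rfl
  have hψc : ContDiffAt ℂ 1 ψ (Ψ q) := hΨc.to_localInverse hΨq one_ne_zero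
  have hψq : ψ (Ψ q) = q := by
    rw [hψΦ, ← hΦc]; exact Φ.left_inv hqs
  have hev : ∀ᶠ y in 𝓝 (Ψ q), Ψ (ψ y) = y ∧ ψ y ∈ U ∧ DifferentiableAt ℂ ψ y := by
    have h1 : ∀ᶠ y in 𝓝 (Ψ q), Ψ (ψ y) = y := by
      have := Φ.eventually_right_inverse (x := Ψ q) (by rw [← hΦc]; exact Φ.map_source hqs)
      exact this
    have h2 : ∀ᶠ y in 𝓝 (Ψ q), ψ y ∈ U := by
      apply hψc.continuousAt.eventually_mem
      rw [hψq]; exact hU.mem_nhds hq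
    have h3 : ∀ᶠ y in 𝓝 (Ψ q), DifferentiableAt ℂ ψ y := by
      filter_upwards [hψc.eventually (by simp)] with y hy
      exact hy.differentiableAt one_ne_zero
    exact h1.and (h2.and h3)
  set ι : K → ℂ × K := fun κ => (ℓ (f q), πK q + κ) with hι
  have hι0 : ι 0 = Ψ q := by simp [hι, hΨ]
  have hιd : ∀ κ, HasFDerivAt ι (ContinuousLinearMap.inr ℂ ℂ K) κ := by
    intro κ
    exact (hasFDerivAt_const _ _).prodMk ((hasFDerivAt_id κ).const_add _)
  have hιc : ContinuousAt ι 0 := (hιd 0).continuousAt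
  have hev2 : ∀ᶠ κ in 𝓝 (0 : K), Ψ (ψ (ι κ)) = ι κ ∧ ψ (ι κ) ∈ U ∧ DifferentiableAt ℂ ψ (ι κ) := by
    have : Tendsto ι (𝓝 0) (𝓝 (Ψ q)) := by rw [← hι0]; exact hιc
    exact this.eventually hev
  obtain ⟨O, hOsub, hOo, h0O⟩ := _root_.mem_nhds_iff.1 hev2
  set g : K → N := fun κ => πN (f (ψ (ι κ))) with hg
  have hgd : DifferentiableOn ℂ g O := by
    intro κ hκ
    obtain ⟨-, h2, h3⟩ := hOsub hκ
    apply DifferentiableAt.differentiableWithinAt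
    have h4 : DifferentiableAt ℂ (fun κ => ψ (ι κ)) κ :=
      DifferentiableAt.comp κ h3 (hιd κ).differentiableAt
    have h5 : DifferentiableAt ℂ (fun κ => f (ψ (ι κ))) κ :=
      DifferentiableAt.comp (g := f) κ (hf.differentiableAt (hU.mem_nhds h2)) h4
    exact DifferentiableAt.comp (g := πN) κ πN.differentiableAt h5
  have hginj : InjOn g O := by
    intro a ha b hb hab
    obtain ⟨ha1, ha2, -⟩ := hOsub ha
    obtain ⟨hb1, hb2, -⟩ := hOsub hb
    have ea : ℓ (f (ψ (ι a))) = ℓ (f q) := congrArg Prod.fst ha1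
    have eb : ℓ (f (ψ (ι b))) = ℓ (f q) := congrArg Prod.fst hb1
    have h1 : (g a : F) = g b := by rw [hab]
    simp only [hg, hπNv, ea, eb, sub_left_inj] at h1
    have h2 := hinj ha2 hb2 h1
    have h3 : ι a = ι b := by rw [← ha1, ← hb1, h2]
    have h4 : πK q + a = πK q + b := congrArg Prod.snd h3
    exact add_left_cancel h4
  have hgder : HasFDerivAt g (πN.comp (A.comp ((L.symm : ℂ × K →L[ℂ] E).comp
      (ContinuousLinearMap.inr ℂ ℂ K)))) 0 := by
    have h1 : HasFDerivAt ψ (L.symm : ℂ × K →L[ℂ] E) (Ψ q) := by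
      have := (HasStrictFDerivAt.to_localInverse (hΨc.hasStrictFDerivAt' hΨq one_ne_zero)).hasFDerivAt
      exact this
    have h2 : HasFDerivAt (fun κ => ψ (ι κ)) ((L.symm : ℂ × K →L[ℂ] E).comp
      (ContinuousLinearMap.inr ℂ ℂ K)) 0 := by
      rw [← hι0] at h1
      exact h1.comp 0 (hιd 0)
    have h3 : HasFDerivAt f A (ψ (ι 0)) := by
      rw [hι0, hψq]; exact (hf.differentiableAt (hU.mem_nhds hq)).hasFDerivAt
    have h4 := h3.comp (0 : K) h2
    exact πN.hasFDerivAt.comp (0 : K) h4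
  have hlv : lam v = 0 := by simp [hlam, hv]
  have hres := IH K N hKdim hNdim g O hOo hgd hginj 0 h0O ⟨v, hlv⟩ (by
    rw [hgder.fderiv]
    have : L.symm ((0 : ℂ), (⟨v, hlv⟩ : K)) = v := by
      rw [ContinuousLinearEquiv.symm_apply_eq]
      change _ = (lam v, πK v)
      refine Prod.ext hlv.symm (Subtype.ext ?_)
      simp [hπKv, hlv]
    simp [this, hv])
  exact congrArg Subtype.val hres

theorem osgood_full (k : ℕ) : ∀ (E : Type u1) (F : Type u2) [NormedAddCommGroup E] [NormedSpace ℂ E]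
      [FiniteDimensional ℂ E] [NormedAddCommGroup F] [NormedSpace ℂ F] [FiniteDimensional ℂ F]
      (_ : Module.finrank ℂ E = k) (_ : Module.finrank ℂ F = k) (f : E → F) (U : Set E)
      (_ : IsOpen U) (_ : DifferentiableOn ℂ f U) (_ : InjOn f U) (p : E) (_ : p ∈ U)
      (v : E) (_ : fderiv ℂ f p v = 0), v = 0 := by
  induction k with
  | zero =>
    intro E F _ _ _ _ _ _ hE hF f U hU hf hinj p hp v hv
    have := Module.finrank_zero_iff.1 hE
    exact Subsingleton.elim _ _
  | succ k IH =>
    intro E F _ _ _ _ _ _ hE hF f U hU hf hinj p hp v hv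
    have hrank := fun (q : E) (hq : q ∈ U) => osgood_rank IH hE hF hU hf hinj hq
    by_cases hne : fderiv ℂ f p ≠ 0
    · exact hrank p hp hne v hv
    push Not at hne
    exfalso
    have : CompleteSpace E := FiniteDimensional.complete ℂ E
    have : CompleteSpace F := FiniteDimensional.complete ℂ F
    rcases Nat.eq_zero_or_pos k with hk | hk
    · subst hk
      have e1 : ℂ ≃L[ℂ] E := ContinuousLinearEquiv.ofFinrankEq (by rw [hE]; simp)
      have e2 : F ≃L[ℂ] ℂ := ContinuousLinearEquiv.ofFinrankEq (by rw [hF]; simp)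
      have h1 := osgood_one (f := fun z => e2 (f (e1 z))) (U := e1 ⁻¹' U)
        (hU.preimage e1.continuous)
        (e2.differentiable.comp_differentiableOn
          (hf.comp e1.differentiable.differentiableOn (fun _ h => h)))
        (fun a ha b hb hab => e1.injective (hinj ha hb (e2.injective hab)))
        (p := e1.symm p) (by simpa using hp)
      apply h1
      have h2 : HasFDerivAt f (0 : E →L[ℂ] F) (e1 (e1.symm p)) := by
        rw [e1.apply_symm_apply, ← hne]
        exact (hf.differentiableAt (hU.mem_nhds hp)).hasFDerivAt
      have h3 := (e2 : F →L[ℂ] ℂ).hasFDerivAt.comp (e1.symm p)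
        (h2.comp (e1.symm p) (e1 : ℂ →L[ℂ] E).hasFDerivAt)
      have h4 := h3.hasDerivAt.deriv
      simpa [Function.comp_def] using h4
    · have e : F ≃L[ℂ] E := ContinuousLinearEquiv.ofFinrankEq (by rw [hE, hF])
      set b := Module.finBasis ℂ E with hb
      set J : E → ℂ := fun x => Matrix.det (Matrix.of fun i j => b.repr (e (fderiv ℂ f x (b j))) i) with hJ
      have hJdet : ∀ x, J x = LinearMap.det ((e : F →L[ℂ] E).comp (fderiv ℂ f x)).toLinearMap := by
        intro x
        rw [← LinearMap.det_toMatrix b]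
        simp only [hJ]
        congr 1
        ext i j
        simp [LinearMap.toMatrix_apply]
      have hJd : DifferentiableOn ℂ J U := by
        have hJ2 : J = fun x => ∑ σ : Equiv.Perm (Fin (Module.finrank ℂ E)),
            Equiv.Perm.sign σ • ∏ i, b.repr (e (fderiv ℂ f x (b i))) (σ i) := by
          funext x
          exact Matrix.det_apply _
        rw [hJ2]
        apply DifferentiableOn.fun_sum
        intro σ _
        apply DifferentiableOn.const_smul
        apply holo_prod
        intro i _
        have h1 := holo_dirderiv hU hf (b i)
        have h2 : DifferentiableOn ℂ (fun x => e (fderiv ℂ f x (b i))) U :=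
          e.differentiable.comp_differentiableOn h1
        have h3 : Differentiable ℂ (fun y : E => b.repr y (σ i)) :=
          (LinearMap.toContinuousLinearMap (b.coord (σ i))).differentiable
        exact h3.comp_differentiableOn h2
      have hcrit : ∀ x ∈ U, J x = 0 → fderiv ℂ f x = 0 := by
        intro x hx hJx
        by_contra hcon
        rw [hJdet] at hJx
        have := LinearMap.bot_lt_ker_of_det_eq_zero hJx
        obtain ⟨y, hy, hy0⟩ := (Submodule.ne_bot_iff _).1 this.ne'
        apply hy0
        apply hrank x hx hcon y
        have : e (fderiv ℂ f x y) = 0 := hy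
        simpa using this
      have hJp : J p = 0 := by
        rw [hJdet, hne]
        have hn : Nontrivial E := Module.nontrivial_of_finrank_pos (R := ℂ) (by omega)
        simp
        
      refine critical_curve hU hJd hf hinj (by omega) hcrit hp hJp ?_
      intro hev
      obtain ⟨r, hr, hball⟩ := Metric.eventually_nhds_iff_ball.1 (hev.and (hU.eventually_mem hp))
      have hn : Nontrivial E := Module.nontrivial_of_finrank_pos (R := ℂ) (by omega)
      obtain ⟨y, hy⟩ := exists_ne (0 : E)
      have hyn : 0 < ‖y‖ := norm_pos_iff.2 hy
      set z := p + ((r / (2 * ‖y‖) : ℝ) : ℂ) • y with hz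
      have hzb : z ∈ ball p r := by
        rw [mem_ball, dist_eq_norm, hz, add_sub_cancel_left, norm_smul, Complex.norm_real,
          Real.norm_of_nonneg (by positivity)]
        have : r / (2 * ‖y‖) * ‖y‖ = r / 2 := by field_simp
        linarith
      have hconst : f z = f p := by
        refine (convex_ball p r).is_const_of_fderivWithin_eq_zero (𝕜 := ℂ) (f := f)
          (fun x hx => (hf.differentiableAt (hU.mem_nhds (hball x hx).2)).differentiableWithinAt)
          ?_ hzb (mem_ball_self hr)
        intro x hx
        rw [fderivWithin_of_isOpen isOpen_ball hx]
        exact hcrit x (hball x hx).2 (hball x hx).1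
      have h1 := hinj (hball z hzb).2 hp hconst
      rw [hz, add_eq_left, smul_eq_zero] at h1
      rcases h1 with h1 | h1
      · have : r / (2 * ‖y‖) = 0 := by exact_mod_cast h1
        have h2 : 0 < r / (2 * ‖y‖) := by positivity
        linarith
      · exact hy h1

end OsgoodFull



section Hartogs
open Metric Set Filter Topology

variable {X : Type*} [NormedAddCommGroup X] [NormedSpace ℂ X]
variable {E : Type*} [NormedAddCommGroup E] [InnerProductSpace ℂ E]
variable {V : Type*} [NormedAddCommGroup V] [NormedSpace ℂ V]

theorem Bopen (P : X →L[ℂ] E) : IsOpen {x | ‖P x‖ < 1} :=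
  isOpen_lt (by fun_prop) continuous_const

theorem Bconv (P : X →L[ℂ] E) : Convex ℝ {x | ‖P x‖ < 1} := by
  have h := (convex_ball (0 : E) 1).linear_preimage (P.restrictScalars ℝ).toLinearMap
  convert h using 1
  ext x
  simp

theorem Q_closure (P : X →L[ℂ] E) {q : X} (hq : ‖P q‖ = 1) : (𝓝[{x | ‖P x‖ < 1}] q).NeBot := by
  rw [← mem_closure_iff_nhdsWithin_neBot]
  have h1 : Tendsto (fun t : ℝ => ((t : ℂ)) • q) (𝓝[<] 1) (𝓝 q) := by
    have : ContinuousAt (fun t : ℝ => ((t : ℂ)) • q) 1 := by fun_prop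
    have h2 := this.tendsto
    simp only [ofReal_one, one_smul] at h2
    exact h2.mono_left nhdsWithin_le_nhds
  refine mem_closure_of_tendsto h1 ?_
  have h2 : ∀ᶠ t : ℝ in 𝓝[<] (1 : ℝ), 0 < t :=
    nhdsWithin_le_nhds (lt_mem_nhds zero_lt_one)
  filter_upwards [h2, self_mem_nhdsWithin] with t ht ht1
  simp only [mem_ofPred_eq, map_smul, norm_smul, hq, Complex.norm_real, mul_one]
  rw [Real.norm_of_nonneg ht.le]
  exact ht1

theorem Q_preconn [FiniteDimensional ℂ E] (P : X →L[ℂ] E) (hP : Function.Surjective P)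
    (hE : 1 < Module.finrank ℂ E) : IsPreconnected {x | ‖P x‖ = 1} := by
  obtain ⟨R, hR⟩ := LinearMap.exists_rightInverse_of_surjective P.toLinearMap
    (LinearMap.range_eq_top.2 hP)
  have hR' : ∀ y, P (R y) = y := fun y => LinearMap.congr_fun hR y
  have hRc : Continuous R := LinearMap.continuous_of_finiteDimensional R
  have hrank : 1 < Module.rank ℝ E := by
    have : FiniteDimensional ℝ E := FiniteDimensional.complexToReal E
    rw [← Module.finrank_eq_rank, finrank_real_of_complex]
    exact_mod_cast (by omega)
  have hs := isPreconnected_sphere hrank (0 : E) 1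
  have hk : IsPreconnected (univ : Set (LinearMap.ker P.toLinearMap)) := isPreconnected_univ
  have := (hs.prod hk).image (fun p : E × LinearMap.ker P.toLinearMap => R p.1 + p.2)
    (by fun_prop)
  convert this using 1
  ext x
  simp only [mem_ofPred_eq, mem_image, Prod.exists]
  constructor
  · intro hx
    refine ⟨P x, ⟨x - R (P x), by simp [hR']⟩, ⟨by simpa using hx, trivial⟩, by simp⟩
  · rintro ⟨y, ⟨k, hk⟩, ⟨hy, -⟩, rfl⟩
    have : P k = 0 := hk
    simpa [hR', this] using hy

theorem hartogs_prop [CompleteSpace V] [FiniteDimensional ℂ E] (P : X →L[ℂ] E) (hP : Function.Surjective P)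
    (hE : 1 < Module.finrank ℂ E) {f g : X → V} {U : Set X} (hU : IsOpen U)
    (hQU : {x | ‖P x‖ = 1} ⊆ U) (hf : DifferentiableOn ℂ f U)
    (hg : DifferentiableOn ℂ g {x | ‖P x‖ < 1}) {q₀ : X} (hq₀ : ‖P q₀‖ = 1)
    (h0 : ∀ᶠ x in 𝓝[{x | ‖P x‖ < 1}] q₀, g x = f x) {q : X} (hq : ‖P q‖ = 1) :
    ∀ᶠ x in 𝓝[{x | ‖P x‖ < 1}] q, g x = f x := by
  set B := {x | ‖P x‖ < 1} with hB
  have hBo : IsOpen B := Bopen P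
  suffices H : (∀ᶠ x in 𝓝[B] q₀, g x = f x) ↔ ∀ᶠ x in 𝓝[B] q, g x = f x from H.1 h0
  refine (Q_preconn P hP hE).induction₂
    (fun a b => (∀ᶠ x in 𝓝[B] a, g x = f x) ↔ ∀ᶠ x in 𝓝[B] b, g x = f x)
    ?_ (fun _ _ _ _ _ _ h1 h2 => h1.trans h2) (fun _ _ _ _ h => h.symm) hq₀ hq
  intro p hp
  obtain ⟨ε, hε, hball⟩ := Metric.isOpen_iff.1 hU p (hQU hp)
  have key : ∀ p' ∈ ball p ε, ‖P p'‖ = 1 → (∀ᶠ x in 𝓝[B] p', g x = f x) →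
      EqOn g f (B ∩ ball p ε) := by
    intro p' hp' hp'Q hev
    have := Q_closure P hp'Q
    have h1 : ∀ᶠ y in 𝓝[B] p', (∀ᶠ x in 𝓝[B] y, g x = f x) ∧ y ∈ B ∧ y ∈ ball p ε :=
      (eventually_eventually_nhdsWithin.2 hev).and
        (eventually_mem_nhdsWithin.and (nhdsWithin_le_nhds (isOpen_ball.mem_nhds hp')))
    obtain ⟨c, hc1, hc2, hc3⟩ := h1.exists
    rw [hBo.nhdsWithin_eq hc2] at hc1
    exact holo_identity (hBo.inter isOpen_ball) ((Bconv P).inter (convex_ball _ _))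
      (hg.mono inter_subset_left) (hf.mono (inter_subset_right.trans hball)) ⟨hc2, hc3⟩ hc1
  have key2 : ∀ p' ∈ ball p ε, EqOn g f (B ∩ ball p ε) → (∀ᶠ x in 𝓝[B] p', g x = f x) := by
    intro p' hp' h
    filter_upwards [self_mem_nhdsWithin, nhdsWithin_le_nhds (isOpen_ball.mem_nhds hp')] with x h1 h2
    exact h ⟨h1, h2⟩
  filter_upwards [self_mem_nhdsWithin, nhdsWithin_le_nhds (ball_mem_nhds p hε)] with p' h1 h2
  exact ⟨fun h => key2 p' h2 (key p (mem_ball_self hε) hp h), fun h => key2 p (mem_ball_self hε)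
    (key p' h2 h1 h)⟩

theorem sphere_thick {r ε : ℝ} (hr : 0 < r) {σ : ℂ} (h : |‖σ‖ - r| < ε) :
    σ ∈ thickening ε (sphere (0 : ℂ) r) := by
  rw [mem_thickening_iff]
  by_cases hσ : σ = 0
  · refine ⟨(r : ℂ), by simp [abs_of_pos hr], ?_⟩
    subst hσ
    simpa using h
  · have hn : 0 < ‖σ‖ := norm_pos_iff.2 hσ
    refine ⟨((r / ‖σ‖ : ℝ) : ℂ) * σ, ?_, ?_⟩
    · simp only [mem_sphere, dist_zero_right, norm_mul, Complex.norm_real, norm_div, norm_norm]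
      rw [Real.norm_of_nonneg hr.le]; field_simp
    · rw [dist_eq_norm]
      have : σ - ((r / ‖σ‖ : ℝ) : ℂ) * σ = ((1 - r / ‖σ‖ : ℝ) : ℂ) * σ := by push_cast; ring
      rw [this, norm_mul, Complex.norm_real, Real.norm_eq_abs]
      have h2 : |1 - r / ‖σ‖| * ‖σ‖ = |(1 - r / ‖σ‖) * ‖σ‖| := by rw [abs_mul, abs_of_pos hn]
      rw [h2]
      have : (1 - r / ‖σ‖) * ‖σ‖ = ‖σ‖ - r := by field_simp
      rwa [this]

/-- equality of circle integrals over close radii -/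
theorem circle_eq {V : Type*} [NormedAddCommGroup V] [NormedSpace ℂ V] {F : ℂ → V} {v : Set ℂ} {r r' ε : ℝ}
    (hr : 0 < r) (hr' : 0 < r') (hv : IsOpen v) (hsub : ∀ σ : ℂ, |‖σ‖ - r| < ε → σ ∈ v)
    (hF : DifferentiableOn ℂ F v) (h : |r' - r| < ε) :
    (∮ σ in C(0, r'), F σ) = ∮ σ in C(0, r), F σ := by
  have hε : 0 < ε := (abs_nonneg _).trans_lt h
  rw [abs_lt] at h
  rcases le_total r r' with hle | hle
  · refine Complex.circleIntegral_eq_of_differentiable_on_annulus_off_countable hr hle countable_empty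
      (hF.continuousOn.mono ?_) ?_
    · rintro σ ⟨h1, h2⟩
      simp only [mem_closedBall, dist_zero_right, mem_ball, not_lt] at h1 h2
      exact hsub σ (abs_lt.2 ⟨by linarith, by linarith⟩)
    · rintro σ ⟨⟨h1, h2⟩, -⟩
      simp only [mem_closedBall, dist_zero_right, mem_ball, not_le] at h1 h2
      exact hF.differentiableAt (hv.mem_nhds (hsub σ (abs_lt.2 ⟨by linarith, by linarith⟩)))
  · refine (Complex.circleIntegral_eq_of_differentiable_on_annulus_off_countable hr' hle countable_empty
      (hF.continuousOn.mono ?_) ?_).symm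
    · rintro σ ⟨h1, h2⟩
      simp only [mem_closedBall, dist_zero_right, mem_ball, not_lt] at h1 h2
      exact hsub σ (abs_lt.2 ⟨by linarith, by linarith⟩)
    · rintro σ ⟨⟨h1, h2⟩, -⟩
      simp only [mem_closedBall, dist_zero_right, mem_ball, not_le] at h1 h2
      exact hF.differentiableAt (hv.mem_nhds (hsub σ (abs_lt.2 ⟨by linarith, by linarith⟩)))

theorem hartogs [FiniteDimensional ℂ X] [FiniteDimensional ℂ E] [CompleteSpace V]
    (P : X →L[ℂ] E) (hP : Function.Surjective P)
    (hE : 1 < Module.finrank ℂ E) {f : X → V} {U : Set X} (hU : IsOpen U)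
    (hQU : {x | ‖P x‖ = 1} ⊆ U) (hf : DifferentiableOn ℂ f U) :
    ∃ g : X → V, DifferentiableOn ℂ g {x | ‖P x‖ < 1} ∧
      ∀ q, ‖P q‖ = 1 → ∀ᶠ x in 𝓝[{x | ‖P x‖ < 1}] q, g x = f x := by
  have hn : Nontrivial E := Module.nontrivial_of_finrank_pos (R := ℂ) (by omega)
  obtain ⟨e, he⟩ := exists_norm_eq E (zero_le_one)
  obtain ⟨eX, heX⟩ := hP e
  set a : X →L[ℂ] ℂ := (innerSL ℂ e).comp P with ha
  have hav : ∀ x, a x = inner ℂ e (P x) := fun x => rfl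
  have haeX : a eX = 1 := by
    rw [hav, heX, inner_self_eq_norm_sq_to_K, he]; simp
  set T : X →L[ℂ] X := ContinuousLinearMap.id ℂ X - a.smulRight eX with hT
  have hTv : ∀ x, T x = x - a x • eX := fun x => rfl
  have haT : ∀ x, a (T x) = 0 := by intro x; simp [hTv, haeX]
  have hnorm : ∀ x (σ : ℂ), ‖P (T x + σ • eX)‖ ^ 2 = ‖P (T x)‖ ^ 2 + ‖σ‖ ^ 2 := by
    intro x σ
    have h0 : inner ℂ (P (T x)) (σ • e) = 0 := by
      rw [inner_smul_right, ← inner_conj_symm, ← hav, haT]; simp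
    rw [map_add, map_smul, heX, norm_add_sq (𝕜 := ℂ), h0]
    simp [norm_smul, he]
  have hxT : ∀ x, T x + a x • eX = x := by intro x; simp [hTv]
  have hnx : ∀ x, ‖P x‖ ^ 2 = ‖P (T x)‖ ^ 2 + ‖a x‖ ^ 2 := by
    intro x; rw [← hnorm, hxT]
  set B := {x | ‖P x‖ < 1} with hB
  have hBo : IsOpen B := Bopen P
  set r : X → ℝ := fun x => √(1 - ‖P (T x)‖ ^ 2) with hr
  have hrc : Continuous r := by fun_prop
  have hBa : ∀ x ∈ B, ‖a x‖ < r x := by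
    intro x hx
    have h1 : ‖P x‖ < 1 := hx
    apply Real.lt_sqrt_of_sq_lt
    have := hnx x
    nlinarith [norm_nonneg (P x)]
  have hrpos : ∀ x ∈ B, 0 < r x := fun x hx => (norm_nonneg _).trans_lt (hBa x hx)
  set K : X × ℂ → V := fun p => (p.2 - a p.1)⁻¹ • f (T p.1 + p.2 • eX) with hK
  set W : Set (X × ℂ) := {p | T p.1 + p.2 • eX ∈ U ∧ ‖a p.1‖ < ‖p.2‖} with hW
  have hWo : IsOpen W :=
    (hU.preimage (f := fun p : X × ℂ => T p.1 + p.2 • eX) (by fun_prop)).inter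
      (isOpen_lt (f := fun p : X × ℂ => ‖a p.1‖) (g := fun p => ‖p.2‖) (by fun_prop) (by fun_prop))
  have hKd : DifferentiableOn ℂ K W := by
    intro p hp
    apply DifferentiableAt.differentiableWithinAt
    have h1 : p.2 - a p.1 ≠ 0 := by
      intro h
      have h2 := hp.2
      rw [sub_eq_zero.1 h] at h2
      exact lt_irrefl _ h2
    have h2 : DifferentiableAt ℂ (fun p : X × ℂ => p.2 - a p.1) p := by fun_prop
    have h3 : DifferentiableAt ℂ (fun p : X × ℂ => T p.1 + p.2 • eX) p := by fun_prop
    exact (DifferentiableAt.fun_inv h2 h1).smul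
      (DifferentiableAt.comp (g := f) p (hf.differentiableAt (hU.mem_nhds hp.1)) h3)
  set g : X → V := fun x => (2 * Real.pi * I : ℂ)⁻¹ • ∮ σ in C(0, r x), K (x, σ) with hg
  have hgB : DifferentiableOn ℂ g B := by
    intro x₀ hx₀
    apply DifferentiableAt.differentiableWithinAt
    have hr0 := hrpos x₀ hx₀
    have hsph : ∀ σ ∈ sphere (0 : ℂ) (r x₀), (x₀, σ) ∈ W := by
      intro σ hσ
      have hσ' : ‖σ‖ = r x₀ := by simpa using hσ
      refine ⟨hQU ?_, by rw [hσ']; exact hBa x₀ hx₀⟩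
      have h1 := hnorm x₀ σ
      have h2 : r x₀ ^ 2 = 1 - ‖P (T x₀)‖ ^ 2 := Real.sq_sqrt (Real.sqrt_pos.1 hr0).le
      rw [hσ', h2] at h1
      have h3 : ‖P (T x₀ + σ • eX)‖ ^ 2 = 1 := by rw [h1]; ring
      change ‖P (T x₀ + σ • eX)‖ = 1
      exact (pow_eq_one_iff_of_nonneg (norm_nonneg _) two_ne_zero).1 h3
    obtain ⟨u, v, hu, hv, hxu, hsv, huv⟩ := generalized_tube_lemma (isCompact_singleton (x := x₀))
      (isCompact_sphere (0 : ℂ) (r x₀)) hWo (by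
        rintro ⟨x, σ⟩ ⟨h1, h2⟩
        rw [mem_singleton_iff] at h1
        simp only at h1 h2
        subst h1
        exact hsph σ h2)
    obtain ⟨ε, hε, hth⟩ := (isCompact_sphere (0 : ℂ) (r x₀)).exists_thickening_subset_open hv hsv
    have hloc : g =ᶠ[𝓝 x₀] fun x => (2 * Real.pi * I : ℂ)⁻¹ • ∮ σ in C(0, r x₀), K (x, σ) := by
      have h1 : ∀ᶠ x in 𝓝 x₀, |r x - r x₀| < ε := by
        have := Metric.continuousAt_iff'.1 (hrc.continuousAt (x := x₀)) ε hε
        simpa [Real.dist_eq] using this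
      filter_upwards [h1, hu.mem_nhds (hxu rfl), hBo.mem_nhds hx₀] with x hx1 hx2 hx3
      simp only [hg]
      congr 1
      refine circle_eq hr0 (hrpos x hx3) hv (fun σ hσ => hth (sphere_thick hr0 hσ)) ?_ hx1
      have : DifferentiableOn ℂ (fun σ : ℂ => (x, σ)) v := by fun_prop
      exact hKd.comp this (fun σ hσ => huv ⟨hx2, hσ⟩)
    refine DifferentiableAt.congr_of_eventuallyEq ?_ hloc
    exact (param_circle hWo hKd hr0.le hsph).const_smul _
  refine ⟨g, hgB, ?_⟩
  -- a starting point
  obtain ⟨y, hy, hy1⟩ : ∃ y : E, inner ℂ e y = 0 ∧ ‖y‖ = 1 := by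
    have hlt : 0 < Module.finrank ℂ (LinearMap.ker (innerSL ℂ e).toLinearMap) := by
      have h1 := (innerSL ℂ e).toLinearMap.finrank_range_add_finrank_ker
      have h2 : Module.finrank ℂ (LinearMap.range (innerSL ℂ e).toLinearMap) ≤ 1 := by
        have := Submodule.finrank_le (LinearMap.range (innerSL ℂ e).toLinearMap)
        simpa using this
      omega
    have hn := Module.nontrivial_of_finrank_pos (R := ℂ) hlt
    obtain ⟨⟨y, hy⟩, hy1⟩ := exists_norm_eq (LinearMap.ker (innerSL ℂ e).toLinearMap) zero_le_one
    exact ⟨y, hy, hy1⟩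
  obtain ⟨q₀, hq₀⟩ := hP y
  have haq : a q₀ = 0 := by rw [hav, hq₀, hy]
  have hTq : T q₀ = q₀ := by simp [hTv, haq]
  have hQ₀ : ‖P q₀‖ = 1 := by rw [hq₀, hy1]
  have hrq : r q₀ = 0 := by simp [hr, hTq, hQ₀]
  intro q hq
  refine hartogs_prop P hP hE hU hQU hf hgB hQ₀ ?_ hq
  obtain ⟨ε, hε, hball⟩ := Metric.isOpen_iff.1 hU q₀ (hQU hQ₀)
  have h1 : ∀ᶠ x in 𝓝 q₀, T x ∈ ball q₀ (ε / 2) := by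
    apply T.continuous.continuousAt.eventually_mem
    rw [hTq]; exact ball_mem_nhds _ (by positivity)
  have h2 : ∀ᶠ x in 𝓝 q₀, r x * ‖eX‖ < ε / 2 := by
    have : ContinuousAt (fun x => r x * ‖eX‖) q₀ := by fun_prop
    apply this.eventually_lt continuousAt_const
    simp only [hrq, zero_mul]; positivity
  filter_upwards [nhdsWithin_le_nhds h1, nhdsWithin_le_nhds h2, self_mem_nhdsWithin] with x hx1 hx2 hx3
  simp only [hg, hK]
  have hd : DifferentiableOn ℂ (fun σ : ℂ => f (T x + σ • eX)) (closedBall 0 (r x)) := by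
    refine hf.comp (t := U) (f := fun σ : ℂ => T x + σ • eX) (by fun_prop) ?_
    intro σ hσ
    apply hball
    rw [mem_ball, dist_eq_norm] at hx1 ⊢
    have hσ' : ‖σ‖ ≤ r x := by simpa using hσ
    have h3 : ‖σ • eX‖ ≤ r x * ‖eX‖ := by rw [norm_smul]; gcongr
    calc ‖T x + σ • eX - q₀‖ = ‖(T x - q₀) + σ • eX‖ := by congr 1; abel
      _ ≤ ‖T x - q₀‖ + ‖σ • eX‖ := norm_add_le _ _
      _ < ε := by linarith
  have hc := hd.circleIntegral_sub_inv_smul (w := a x) (by simpa using hBa x hx3)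
  rw [hc, smul_smul, inv_mul_cancel₀ (by simp [Real.pi_ne_zero, I_ne_zero]), one_smul, hxT]

end Hartogs



section MaxPrinciple
open Metric Set Filter Topology

variable {X : Type*} [NormedAddCommGroup X] [NormedSpace ℂ X]
variable {E : Type*} [NormedAddCommGroup E] [InnerProductSpace ℂ E]

/-- the boundary-extended map -/
noncomputable def gext (P : X →L[ℂ] E) (f g : X → X) (x : X) : X :=
  open Classical in if ‖P x‖ < 1 then g x else f x

theorem gext_B {P : X →L[ℂ] E} {f g : X → X} {x : X} (h : ‖P x‖ < 1) : gext P f g x = g x := by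
  simp [gext, h]

theorem gext_Q {P : X →L[ℂ] E} {f g : X → X} {x : X} (h : ‖P x‖ = 1) : gext P f g x = f x := by
  simp [gext, h]

theorem gext_ev {P : X →L[ℂ] E} {f g : X → X} {q : X}
    (h : ∀ᶠ x in 𝓝[{x | ‖P x‖ < 1}] q, g x = f x) :
    ∀ᶠ x in 𝓝 q, gext P f g x = f x := by
  filter_upwards [eventually_nhdsWithin_iff.1 h] with x hx
  unfold gext
  split_ifs with h1
  · exact hx h1
  · rfl

theorem gext_diffCont {P : X →L[ℂ] E} {f g : X → X} {U : Set X} (hU : IsOpen U)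
    (hQU : {x | ‖P x‖ = 1} ⊆ U) (hf : DifferentiableOn ℂ f U)
    (hg : DifferentiableOn ℂ g {x | ‖P x‖ < 1})
    (hgf : ∀ q, ‖P q‖ = 1 → ∀ᶠ x in 𝓝[{x | ‖P x‖ < 1}] q, g x = f x)
    {φ : ℂ → X} (hφ : Differentiable ℂ φ) {D : Set ℂ} (hD : ∀ z ∈ D, ‖P (φ z)‖ < 1) :
    DiffContOnCl ℂ (fun z => gext P f g (φ z)) D := by
  have hdiff : ∀ x, ‖P x‖ ≤ 1 → DifferentiableAt ℂ (gext P f g) x := by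
    intro x hx
    rcases hx.lt_or_eq with h | h
    · have h1 : gext P f g =ᶠ[𝓝 x] g := by
        filter_upwards [(Bopen P).mem_nhds h] with y hy
        exact gext_B hy
      exact (hg.differentiableAt ((Bopen P).mem_nhds h)).congr_of_eventuallyEq h1
    · exact (hf.differentiableAt (hU.mem_nhds (hQU h))).congr_of_eventuallyEq (gext_ev (hgf x h))
  have hcl : ∀ z ∈ closure D, ‖P (φ z)‖ ≤ 1 := by
    intro z hz
    have hc : IsClosed {z | ‖P (φ z)‖ ≤ 1} :=
      isClosed_le (by have := hφ.continuous; fun_prop) continuous_const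
    exact closure_minimal (fun z hz => (hD z hz).le) hc hz
  have : ∀ z ∈ closure D, DifferentiableAt ℂ (fun z => gext P f g (φ z)) z := fun z hz =>
    DifferentiableAt.comp z (hdiff _ (hcl z hz)) (hφ z)
  exact ⟨fun z hz => (this z (subset_closure hz)).differentiableWithinAt,
    fun z hz => (this z hz).continuousAt.continuousWithinAt⟩

theorem g_mapsTo {P : X →L[ℂ] E} (hP : Function.Surjective P) [Nontrivial E]
    {f g : X → X} {U : Set X} (hU : IsOpen U)
    (hQU : {x | ‖P x‖ = 1} ⊆ U) (hf : DifferentiableOn ℂ f U)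
    (hg : DifferentiableOn ℂ g {x | ‖P x‖ < 1})
    (hgf : ∀ q, ‖P q‖ = 1 → ∀ᶠ x in 𝓝[{x | ‖P x‖ < 1}] q, g x = f x)
    (hmaps : ∀ q, ‖P q‖ = 1 → ‖P (f q)‖ = 1)
    (hsurj : ∀ y, ‖P y‖ = 1 → ∃ q, ‖P q‖ = 1 ∧ f q = y) {x : X} (hx : ‖P x‖ < 1) :
    ‖P (g x)‖ < 1 := by
  obtain ⟨e, he⟩ := exists_norm_eq E (zero_le_one)
  obtain ⟨v, hv⟩ := hP e
  have hle : ∀ x, ‖P x‖ < 1 → ‖P (g x)‖ ≤ 1 := by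
    intro x hx
    set D : Set ℂ := {σ | ‖P (x + σ • v)‖ < 1} with hD
    have hDo : IsOpen D := isOpen_lt (by fun_prop) continuous_const
    have hDb : Bornology.IsBounded D := by
      refine (isBounded_iff_forall_norm_le).2 ⟨2, fun σ hσ => ?_⟩
      have h1 : ‖P (x + σ • v)‖ < 1 := hσ
      rw [map_add, map_smul, hv] at h1
      have h2 : ‖σ • e‖ ≤ ‖P x + σ • e‖ + ‖P x‖ := by
        have := norm_sub_le (P x + σ • e) (P x)
        simpa using this
      rw [norm_smul, he] at h2
      linarith
    have hdc := gext_diffCont hU hQU hf hg hgf (φ := fun σ : ℂ => x + σ • v) (by fun_prop)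
      (D := D) (fun z hz => hz)
    have hdc2 : DiffContOnCl ℂ (fun σ => P (gext P f g (x + σ • v))) D :=
      P.differentiable.comp_diffContOnCl hdc
    have h0D : (0 : ℂ) ∈ D := by simpa [hD] using hx
    have := Complex.norm_le_of_forall_mem_frontier_norm_le hDb hdc2 (C := 1) (z := 0) (by
      intro z hz
      rw [hDo.frontier_eq] at hz
      have h1 : ‖P (x + z • v)‖ ≤ 1 := by
        have hc : IsClosed {σ : ℂ | ‖P (x + σ • v)‖ ≤ 1} := isClosed_le (by fun_prop) continuous_const
        have hsub : D ⊆ {σ : ℂ | ‖P (x + σ • v)‖ ≤ 1} :=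
          fun z (hz : ‖P (x + z • v)‖ < 1) => hz.le
        exact closure_minimal hsub hc hz.1
      have h2 : ‖P (x + z • v)‖ = 1 := le_antisymm h1 (not_lt.1 hz.2)
      rw [gext_Q h2, hmaps _ h2]) (subset_closure h0D)
    simpa [gext_B hx] using this
  refine lt_of_le_of_ne (hle x hx) ?_
  intro heq
  set B := {x | ‖P x‖ < 1} with hB
  set h : X → ℂ := fun y => inner ℂ (P (g x)) (P (g y)) with hh
  have hhd : DifferentiableOn ℂ h B := by
    have := ((innerSL ℂ (P (g x))).comp P).differentiable.comp_differentiableOn hg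
    exact this
  have hhx : h x = 1 := by
    simp only [hh]; rw [inner_self_eq_norm_sq_to_K, heq]; simp
  have hmax : IsMaxOn (norm ∘ h) B x := by
    intro y hy
    simp only [Function.comp, mem_ofPred_eq, hhx, norm_one]
    refine (norm_inner_le_norm _ _).trans ?_
    rw [heq, one_mul]
    exact hle y hy
  have hconst := Complex.eqOn_of_isPreconnected_of_isMaxOn_norm (Bconv P).isPreconnected (Bopen P)
    hhd hx hmax
  obtain ⟨y, hy⟩ := hP (-P (g x))
  obtain ⟨q, hq, hfq⟩ := hsurj y (by rw [hy, norm_neg, heq])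
  have hnb := Q_closure P hq
  have h1 : Tendsto (fun y => inner ℂ (P (g x)) (P (f y))) (𝓝[B] q)
      (𝓝 (inner ℂ (P (g x)) (P (f q)))) := by
    have : ContinuousAt (fun y => inner ℂ (P (g x)) (P (f y))) q := by
      have := (hf.differentiableAt (hU.mem_nhds (hQU hq))).continuousAt
      fun_prop
    exact this.tendsto.mono_left nhdsWithin_le_nhds
  have h2 : Tendsto (fun y => inner ℂ (P (g x)) (P (f y))) (𝓝[B] q) (𝓝 1) := by
    refine tendsto_const_nhds.congr' ?_
    filter_upwards [hgf q hq, self_mem_nhdsWithin] with y h3 h4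
    rw [← h3]
    have := hconst h4
    simp only [Function.const, hhx] at this
    exact this.symm
  have h3 := tendsto_nhds_unique h1 h2
  rw [hfq, hy, inner_neg_right, inner_self_eq_norm_sq_to_K, heq] at h3
  norm_num at h3

end MaxPrinciple



section HopfLemma
open Metric Set Filter Topology

variable {X : Type*} [NormedAddCommGroup X] [NormedSpace ℂ X]
variable {E : Type*} [NormedAddCommGroup E] [InnerProductSpace ℂ E]

theorem deriv_nonpos_of_left {h : ℝ → ℝ} {h' a : ℝ} (hd : HasDerivAt h h' a) (h0 : h a = 0)
    (hn : ∀ᶠ t in 𝓝[<] a, 0 ≤ h t) : h' ≤ 0 := by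
  have h1 : Tendsto (slope h a) (𝓝[<] a) (𝓝 h') :=
    hd.tendsto_slope.mono_left (nhdsWithin_mono _ (fun x hx => ne_of_lt hx))
  refine le_of_tendsto h1 ?_
  filter_upwards [hn, self_mem_nhdsWithin] with t ht hta
  rw [slope_def_field, h0, sub_zero]
  exact div_nonpos_of_nonneg_of_nonpos ht (sub_nonpos.2 (le_of_lt hta))

theorem hopf {P : X →L[ℂ] E} {f g : X → X} {U : Set X} (hU : IsOpen U)
    (hQU : {x | ‖P x‖ = 1} ⊆ U) (hf : DifferentiableOn ℂ f U)
    (hg : DifferentiableOn ℂ g {x | ‖P x‖ < 1})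
    (hgf : ∀ q, ‖P q‖ = 1 → ∀ᶠ x in 𝓝[{x | ‖P x‖ < 1}] q, g x = f x)
    (hmaps : ∀ q, ‖P q‖ = 1 → ‖P (f q)‖ = 1)
    (hgB : ∀ x, ‖P x‖ < 1 → ‖P (g x)‖ < 1) {q : X} (hq : ‖P q‖ = 1) :
    0 < (inner ℂ (P (f q)) (P (fderiv ℂ f q q))).re := by
  have hFq := hmaps q hq
  set Λ : X →L[ℂ] ℂ := (innerSL ℂ (P (f q))).comp P with hΛ
  have hΛv : ∀ x, Λ x = inner ℂ (P (f q)) (P x) := fun x => rfl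
  have hΛle : ∀ x, ‖Λ x‖ ≤ ‖P x‖ := by
    intro x
    have := norm_inner_le_norm (𝕜 := ℂ) (P (f q)) (P x)
    rwa [hFq, one_mul] at this
  set u : ℂ → ℂ := fun τ => Λ (gext P f g (τ • q)) with hu
  have hPτ : ∀ τ : ℂ, ‖P (τ • q)‖ = ‖τ‖ := by intro τ; simp [norm_smul, hq]
  have hu1 : DiffContOnCl ℂ u (ball 0 1) :=
    Λ.differentiable.comp_diffContOnCl (gext_diffCont hU hQU hf hg hgf (φ := fun τ : ℂ => τ • q)
      (by fun_prop) (D := ball 0 1) (fun z hz => by rw [hPτ]; simpa using hz))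
  have huB : ∀ τ ∈ ball (0 : ℂ) 1, ‖u τ‖ < 1 := by
    intro τ hτ
    have h1 : ‖P (τ • q)‖ < 1 := by rw [hPτ]; simpa using hτ
    refine (hΛle _).trans_lt ?_
    rw [gext_B h1]; exact hgB _ h1
  have huS : ∀ τ : ℂ, ‖τ‖ = 1 → ‖u τ‖ ≤ 1 := by
    intro τ hτ
    have h1 : ‖P (τ • q)‖ = 1 := by rw [hPτ]; exact hτ
    refine (hΛle _).trans ?_
    rw [gext_Q h1]; exact (hmaps _ h1).le
  -- bound on the inner circle
  obtain ⟨M, hM0, hM1, hM⟩ : ∃ M : ℝ, 0 ≤ M ∧ M < 1 ∧ ∀ τ : ℂ, ‖τ‖ = 1 / 2 → ‖u τ‖ ≤ M := by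
    have hsub : sphere (0 : ℂ) (1 / 2) ⊆ ball 0 1 := by
      intro τ hτ
      have : ‖τ‖ = 1 / 2 := by simpa using hτ
      simp only [mem_ball, dist_zero_right]; linarith
    obtain ⟨τ₀, hτ₀, hmax⟩ := (isCompact_sphere (0 : ℂ) (1 / 2)).exists_isMaxOn
      (NormedSpace.sphere_nonempty.2 (by norm_num)) (hu1.1.continuousOn.mono hsub).norm
    exact ⟨‖u τ₀‖, norm_nonneg _, huB _ (hsub hτ₀), fun τ hτ => hmax (by simpa using hτ)⟩
  obtain ⟨N, hN⟩ := exists_pow_lt_of_lt_one (show (0 : ℝ) < 1 / 2 by norm_num) hM1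
  -- the annulus
  set A : Set ℂ := {τ | 1 / 2 < ‖τ‖ ∧ ‖τ‖ < 1} with hA
  have hAo : IsOpen A := (isOpen_lt continuous_const continuous_norm).inter
    (isOpen_lt continuous_norm continuous_const)
  have hAsub : A ⊆ ball 0 1 := fun τ hτ => by simpa using hτ.2
  have hAcl : ∀ τ ∈ closure A, 1 / 2 ≤ ‖τ‖ ∧ ‖τ‖ ≤ 1 := by
    intro τ hτ
    have hc : IsClosed {τ : ℂ | 1 / 2 ≤ ‖τ‖ ∧ ‖τ‖ ≤ 1} :=
      (isClosed_le continuous_const continuous_norm).inter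
        (isClosed_le continuous_norm continuous_const)
    have hsub : A ⊆ {τ : ℂ | 1 / 2 ≤ ‖τ‖ ∧ ‖τ‖ ≤ 1} :=
      fun τ (hτ : 1 / 2 < ‖τ‖ ∧ ‖τ‖ < 1) => ⟨hτ.1.le, hτ.2.le⟩
    exact closure_minimal hsub hc hτ
  have huA : DiffContOnCl ℂ u A := hu1.mono hAsub
  have hne : ∀ τ ∈ closure A, τ ≠ 0 := by
    intro τ hτ h
    have := (hAcl τ hτ).1
    rw [h, norm_zero] at this
    norm_num at this
  have hF : DiffContOnCl ℂ (fun τ => u τ ^ N * τ⁻¹) A := by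
    refine ⟨fun τ hτ => ?_, fun τ hτ => ?_⟩
    · exact ((huA.1 τ hτ).pow N).mul
        (differentiableAt_inv (hne τ (subset_closure hτ))).differentiableWithinAt
    · exact ((huA.2 τ hτ).pow N).mul
        (continuousAt_inv₀ (hne τ hτ)).continuousWithinAt
  have hAb : Bornology.IsBounded A := isBounded_ball.subset hAsub
  have hbound : ∀ τ ∈ A, ‖u τ‖ ^ N ≤ ‖τ‖ := by
    intro τ hτ
    have := Complex.norm_le_of_forall_mem_frontier_norm_le hAb hF (C := 1) (z := τ) (by
      intro z hz
      rw [hAo.frontier_eq] at hz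
      obtain ⟨h1, h2⟩ := hAcl z hz.1
      have h3 : ‖z‖ = 1 / 2 ∨ ‖z‖ = 1 := by
        by_contra hcon
        push Not at hcon
        exact hz.2 ⟨lt_of_le_of_ne h1 (Ne.symm hcon.1), lt_of_le_of_ne h2 hcon.2⟩
      rw [norm_mul, norm_pow, norm_inv]
      rcases h3 with h3 | h3
      · rw [h3]
        have : ‖u z‖ ^ N ≤ M ^ N := pow_le_pow_left₀ (norm_nonneg _) (hM z h3) N
        linarith
      · rw [h3, inv_one, mul_one]
        exact pow_le_one₀ (norm_nonneg _) (huS z h3)) (subset_closure hτ)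
    rw [norm_mul, norm_pow, norm_inv] at this
    have hpos : 0 < ‖τ‖ := by have := hτ.1; linarith
    rwa [← div_eq_mul_inv, div_le_one hpos] at this
  -- derivative along the radius
  have hder : HasDerivAt (fun t : ℝ => (Λ (f ((t : ℂ) • q))).re) (Λ (fderiv ℂ f q q)).re 1 := by
    have h1 : HasFDerivAt f (fderiv ℂ f q) (((1 : ℝ) : ℂ) • q) := by
      rw [ofReal_one, one_smul]
      exact (hf.differentiableAt (hU.mem_nhds (hQU hq))).hasFDerivAt
    have h2 : HasDerivAt (fun t : ℂ => t • q) ((1 : ℂ) • q) ((1 : ℝ) : ℂ) :=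
      (hasDerivAt_id _).smul_const q
    have h3 := h1.comp_hasDerivAt _ h2
    have h4 := Λ.hasFDerivAt.comp_hasDerivAt _ h3
    rw [one_smul] at h4
    exact h4.real_of_complex
  set ρ : ℝ → ℝ := fun t => (Λ (f ((t : ℂ) • q))).re with hρ
  have hρ1 : ρ 1 = 1 := by
    simp only [hρ, ofReal_one, one_smul, hΛv]
    rw [inner_self_eq_norm_sq_to_K, hFq]; simp
  have hder2 : HasDerivAt (fun t : ℝ => t - ρ t ^ N) (1 - N * (Λ (fderiv ℂ f q q)).re) 1 := by
    have h1 := (hder.pow N)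
    have h2 := (hasDerivAt_id (1 : ℝ)).sub h1
    rw [hρ1, one_pow, mul_one] at h2
    exact h2
  have hle := deriv_nonpos_of_left hder2 (by simp [hρ1]) (by
    have e1 : ∀ᶠ t in 𝓝 (1 : ℝ), 0 < ρ t :=
      hder.continuousAt.eventually (lt_mem_nhds (by rw [hρ1]; norm_num))
    have e2 : ∀ᶠ t in 𝓝 (1 : ℝ), (1 / 2 : ℝ) < t := lt_mem_nhds (by norm_num)
    have e3 : ∀ᶠ t : ℝ in 𝓝 (1 : ℝ), gext P f g ((t : ℂ) • q) = f ((t : ℂ) • q) := by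
      have hc : Tendsto (fun t : ℝ => (t : ℂ) • q) (𝓝 1) (𝓝 q) := by
        have : ContinuousAt (fun t : ℝ => (t : ℂ) • q) 1 := by fun_prop
        have h2 := this.tendsto
        simpa using h2
      exact hc.eventually (gext_ev (hgf q hq))
    filter_upwards [nhdsWithin_le_nhds e1, nhdsWithin_le_nhds e2, nhdsWithin_le_nhds e3,
      self_mem_nhdsWithin] with t h1 h2 h3 h4
    have ht : ‖(t : ℂ)‖ = t := by rw [Complex.norm_real, Real.norm_of_nonneg (by linarith)]
    have h5 := hbound t ⟨by rw [ht]; exact h2, by rw [ht]; exact h4⟩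
    rw [ht] at h5
    have h6 : ρ t ≤ ‖u t‖ := by
      simp only [hρ, hu, h3]
      exact Complex.re_le_norm _
    have h7 : ρ t ^ N ≤ ‖u t‖ ^ N := pow_le_pow_left₀ h1.le h6 N
    linarith)
  rw [← hΛv]
  by_contra hcon
  push Not at hcon
  have : (N : ℝ) * (Λ (fderiv ℂ f q q)).re ≤ 0 :=
    mul_nonpos_of_nonneg_of_nonpos (Nat.cast_nonneg _) hcon
  linarith

end HopfLemma



section Levi
open Metric Set Filter Topology

variable {X : Type*} [NormedAddCommGroup X] [NormedSpace ℂ X]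
variable {E : Type*} [NormedAddCommGroup E] [InnerProductSpace ℂ E]

theorem inner_self_one {y : E} (h : ‖y‖ = 1) : inner ℂ y y = (1 : ℂ) := by
  rw [inner_self_eq_norm_sq_to_K, h]; simp

theorem re_inner_le {y z : E} (h : ‖y‖ = 1) : (inner ℂ y z : ℂ).re ≤ ‖z‖ := by
  have h1 := norm_inner_le_norm (𝕜 := ℂ) y z
  rw [h, one_mul] at h1
  exact (Complex.re_le_norm _).trans h1

theorem tang_re {P : X →L[ℂ] E} {F : X → E} {A : X →L[ℂ] E} {q : X} (hF : HasFDerivAt F A q)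
    (hq : ‖P q‖ = 1) (hFq : ‖F q‖ = 1)
    (hFB : ∀ᶠ x in 𝓝 q, ‖P x‖ < 1 → ‖F x‖ < 1) {w : X} (hw : (inner ℂ (P q) (P w) : ℂ).re < 0) :
    (inner ℂ (F q) (A w) : ℂ).re ≤ 0 := by
  set Λ : E →L[ℂ] ℂ := innerSL ℂ (F q) with hΛ
  have hΛv : ∀ x, Λ x = inner ℂ (F q) x := fun x => rfl
  have hder : HasDerivAt (fun s : ℝ => (Λ (F (q - (s : ℂ) • w))).re) (-(Λ (A w))).re 0 := by
    have h1 : HasFDerivAt F A (q - ((0 : ℝ) : ℂ) • w) := by simpa using hF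
    have h2 : HasDerivAt (fun s : ℂ => q - s • w) (-((1 : ℂ) • w)) ((0 : ℝ) : ℂ) :=
      ((hasDerivAt_id _).smul_const w).const_sub q
    have h4 := Λ.hasFDerivAt.comp_hasDerivAt _ (h1.comp_hasDerivAt _ h2)
    rw [one_smul, map_neg, map_neg] at h4
    exact h4.real_of_complex
  have hder2 := hder.const_sub 1
  have h := deriv_nonpos_of_left hder2 (by
      rw [hΛv, ofReal_zero, zero_smul, sub_zero, inner_self_one hFq]; simp) (by
    have hc : Tendsto (fun s : ℝ => q - (s : ℂ) • w) (𝓝[<] 0) (𝓝 q) := by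
      have : ContinuousAt (fun s : ℝ => q - (s : ℂ) • w) 0 := by fun_prop
      have h2 := this.tendsto
      simp only [ofReal_zero, zero_smul, sub_zero] at h2
      exact h2.mono_left nhdsWithin_le_nhds
    have e2 : ∀ᶠ s in 𝓝 (0 : ℝ), 0 < -2 * (inner ℂ (P q) (P w) : ℂ).re + s * ‖P w‖ ^ 2 := by
      have : ContinuousAt (fun s : ℝ => -2 * (inner ℂ (P q) (P w) : ℂ).re + s * ‖P w‖ ^ 2) 0 := by
        fun_prop
      apply this.eventually (lt_mem_nhds _)
      simp only [zero_mul, add_zero]; linarith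
    filter_upwards [hc.eventually hFB, nhdsWithin_le_nhds e2, self_mem_nhdsWithin] with s h1 h2 h3
    have h3' : s < 0 := h3
    have hn : ‖P (q - (s : ℂ) • w)‖ ^ 2 < 1 := by
      rw [map_sub, map_smul, norm_sub_sq (𝕜 := ℂ), hq, norm_smul, inner_smul_right,
        Complex.norm_real, Real.norm_eq_abs]
      have : RCLike.re ((s : ℂ) * inner ℂ (P q) (P w)) = s * (inner ℂ (P q) (P w) : ℂ).re :=
        Complex.re_ofReal_mul _ _
      rw [this, mul_pow, sq_abs]
      nlinarith
    have h4 := h1 (by nlinarith [norm_nonneg (P (q - (s : ℂ) • w))])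
    have h5 := re_inner_le (z := F (q - (s : ℂ) • w)) hFq
    rw [hΛv]
    linarith)
  rw [Complex.neg_re, neg_neg] at h
  exact h

theorem tang {P : X →L[ℂ] E} {F : X → E} {A : X →L[ℂ] E} {q : X} (hF : HasFDerivAt F A q)
    (hq : ‖P q‖ = 1) (hFq : ‖F q‖ = 1)
    (hFB : ∀ᶠ x in 𝓝 q, ‖P x‖ < 1 → ‖F x‖ < 1) {v : X} (hv : inner ℂ (P q) (P v) = (0 : ℂ)) :
    inner ℂ (F q) (A v) = (0 : ℂ) := by
  have key : ∀ v, inner ℂ (P q) (P v) = (0 : ℂ) → (inner ℂ (F q) (A v) : ℂ).re ≤ 0 := by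
    intro v hv
    have h1 : ∀ s : ℝ, 0 < s → (inner ℂ (F q) (A v) : ℂ).re ≤ s * (inner ℂ (F q) (A q) : ℂ).re := by
      intro s hs
      have := tang_re hF hq hFq hFB (w := v - (s : ℂ) • q) (by
        rw [map_sub, map_smul, inner_sub_right, inner_smul_right, hv, inner_self_one hq]
        simpa using hs)
      rw [map_sub, map_smul, inner_sub_right, inner_smul_right, Complex.sub_re,
        Complex.re_ofReal_mul] at this
      linarith
    have h2 : Tendsto (fun s : ℝ => s * (inner ℂ (F q) (A q) : ℂ).re) (𝓝[>] 0) (𝓝 0) := by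
      have : ContinuousAt (fun s : ℝ => s * (inner ℂ (F q) (A q) : ℂ).re) 0 := by fun_prop
      have h3 := this.tendsto
      simp only [zero_mul] at h3
      exact h3.mono_left nhdsWithin_le_nhds
    refine ge_of_tendsto h2 ?_
    filter_upwards [self_mem_nhdsWithin] with s hs
    exact h1 s hs
  have k1 := key v hv
  have k2 := key (-v) (by simp [hv])
  have k3 := key (I • v) (by rw [map_smul, inner_smul_right, hv, mul_zero])
  have k4 := key (-(I • v)) (by simp [inner_smul_right, hv])
  simp [inner_smul_right] at k1 k2 k3 k4
  apply Complex.ext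
  · simp; linarith
  · simp; linarith

theorem arith_s {ε s : ℝ} (hε0 : 0 < ε) (hε1 : ε < 1) (hs0 : 0 ≤ s) (hs2 : s ^ 2 = 1 + ε ^ 2) :
    1 < s ∧ 0 < 1 - s⁻¹ ∧ ε ^ 2 ≤ 4 * (1 - s⁻¹) ∧ 1 - s⁻¹ ≤ ε ∧ s⁻¹ * s = 1 := by
  have hs1 : 1 < s := by nlinarith
  have hsle : s < 3 / 2 := by nlinarith
  have hsi : s⁻¹ * s = 1 := inv_mul_cancel₀ (by linarith)
  set δ : ℝ := 1 - s⁻¹ with hδ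
  have hδs : δ * s = s - 1 := by rw [hδ]; linarith
  have hδ0 : 0 < δ := by by_contra h; nlinarith
  have hδ1 : δ ≤ ε ^ 2 / 2 := by by_contra h; nlinarith
  have hδ2 : ε ^ 2 ≤ 4 * δ := by
    have : ε ^ 2 = δ * s * (s + 1) := by rw [hδs]; nlinarith
    rw [this]
    nlinarith [mul_pos hδ0 (by linarith : (0:ℝ) < 3 / 2 - s)]
  have hδε : δ ≤ ε := by nlinarith
  exact ⟨hs1, hδ0, hδ2, hδε, hsi⟩

set_option maxHeartbeats 2000000 in
theorem levi {P : X →L[ℂ] E} {F : X → E} {A : X →L[ℂ] E} {q : X} {U : Set X} (hU : IsOpen U)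
    (hqU : q ∈ U) (hFU : DifferentiableOn ℂ F U)
    (hF : HasStrictFDerivAt F A q)
    (hq : ‖P q‖ = 1) (hFq : ‖F q‖ = 1)
    (hFB : ∀ᶠ x in 𝓝 q, ‖P x‖ < 1 → ‖F x‖ < 1)
    (hFQ : ∀ x, ‖P x‖ = 1 → ‖F x‖ = 1)
    (hpos : 0 < (inner ℂ (F q) (A q) : ℂ).re) {v : X} (hv : A v = 0) : P v = 0 := by
  have hperp : inner ℂ (P q) (P v) = (0 : ℂ) := by
    set b : ℂ := inner ℂ (P q) (P v) with hb
    have h1 := tang hF.hasFDerivAt hq hFq hFB (v := v - b • q) (by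
      rw [map_sub, map_smul, inner_sub_right, inner_smul_right, inner_self_one hq]; simp [hb])
    rw [map_sub, map_smul, hv, zero_sub, inner_neg_right, inner_smul_right, neg_eq_zero,
      mul_eq_zero] at h1
    rcases h1 with h1 | h1
    · exact h1
    · rw [h1] at hpos; simp at hpos
  by_contra hPv
  wlog hPv1 : ‖P v‖ = 1 generalizing v
  · have hn : ‖P v‖ ≠ 0 := norm_ne_zero_iff.2 hPv
    refine this (v := ((‖P v‖⁻¹ : ℝ) : ℂ) • v) (by simp [hv])
      (by rw [map_smul, inner_smul_right, hperp, mul_zero]) ?_ ?_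
    · rw [map_smul]
      exact smul_ne_zero (by simpa using hPv) hPv
    · rw [map_smul, norm_smul, Complex.norm_real, norm_inv, norm_norm, inv_mul_cancel₀ hn]
  set lam := (inner ℂ (F q) (A q) : ℂ).re with hlam
  set M : ℝ := ‖q‖ + ‖v‖ with hM
  have hM0 : 0 ≤ M := by positivity
  set C : ℝ := ‖A q‖ with hC
  -- choice of κ
  obtain ⟨κ, hκ0, hκ⟩ : ∃ κ : ℝ, 0 < κ ∧ κ * M + 4 * κ ^ 2 * M ^ 2 < lam / 2 := by
    have hc : ContinuousAt (fun κ : ℝ => κ * M + 4 * κ ^ 2 * M ^ 2) 0 := by fun_prop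
    have h1 : ∀ᶠ κ in 𝓝 (0 : ℝ), κ * M + 4 * κ ^ 2 * M ^ 2 < lam / 2 :=
      hc.eventually (gt_mem_nhds (by simp; exact hpos))
    have h2 : ∀ᶠ κ in 𝓝[>] (0 : ℝ), 0 < κ ∧ κ * M + 4 * κ ^ 2 * M ^ 2 < lam / 2 :=
      eventually_mem_nhdsWithin.and (nhdsWithin_le_nhds h1)
    exact h2.exists
  have hstr := hF.isLittleO.bound hκ0
  obtain ⟨r, hr, hball⟩ := Metric.mem_nhds_iff.1
    (Filter.inter_mem hstr ((hU.preimage continuous_fst).mem_nhds (show (q, q) ∈ Prod.fst ⁻¹' U from hqU)))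
  have hest : ∀ x y, ‖x - q‖ < r → ‖y - q‖ < r → ‖F x - F y - A (x - y)‖ ≤ κ * ‖x - y‖ := by
    intro x y hx hy
    have : (x, y) ∈ ball (q, q) r := by
      rw [mem_ball, Prod.dist_eq, max_lt_iff, dist_eq_norm, dist_eq_norm]
      exact ⟨hx, hy⟩
    exact (hball this).1
  have hinU : ∀ x, ‖x - q‖ < r → x ∈ U := by
    intro x hx
    have : (x, q) ∈ ball (q, q) r := by
      rw [mem_ball, Prod.dist_eq, max_lt_iff, dist_eq_norm, dist_eq_norm]
      exact ⟨hx, by simpa using hr⟩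
    exact (hball this).2
  -- choice of ε
  obtain ⟨ε, hε0, hε1, hε2, hε3⟩ : ∃ ε : ℝ, 0 < ε ∧ ε < 1 ∧ ε * M < r ∧ ε * C ^ 2 < lam / 2 := by
    have h1 : ∀ᶠ ε in 𝓝 (0 : ℝ), ε < 1 := gt_mem_nhds (by norm_num)
    have h2 : ∀ᶠ ε in 𝓝 (0 : ℝ), ε * M < r := by
      have hc : ContinuousAt (fun ε : ℝ => ε * M) 0 := by fun_prop
      exact hc.eventually (gt_mem_nhds (by simpa using hr))
    have h3 : ∀ᶠ ε in 𝓝 (0 : ℝ), ε * C ^ 2 < lam / 2 := by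
      have hc : ContinuousAt (fun ε : ℝ => ε * C ^ 2) 0 := by fun_prop
      exact hc.eventually (gt_mem_nhds (by simp; exact hpos))
    have h4 : ∀ᶠ ε in 𝓝[>] (0 : ℝ), 0 < ε ∧ ε < 1 ∧ ε * M < r ∧ ε * C ^ 2 < lam / 2 :=
      eventually_mem_nhdsWithin.and (Filter.Eventually.filter_mono nhdsWithin_le_nhds
        (h1.and (h2.and h3)))
    exact h4.exists
  set s : ℝ := √(1 + ε ^ 2) with hs
  have hs2 : s ^ 2 = 1 + ε ^ 2 := Real.sq_sqrt (by positivity)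
  have hs0 : 0 ≤ s := Real.sqrt_nonneg _
  obtain ⟨hs1, hδ0, hδ2, hδε, hsi⟩ := arith_s hε0 hε1 hs0 hs2
  set δ : ℝ := 1 - s⁻¹ with hδ
  have hsi1 : s⁻¹ ≤ 1 := inv_le_one_of_one_le₀ hs1.le
  have hsi0 : 0 < s⁻¹ := inv_pos.2 (by linarith)
  -- lower bound on circle
  have hcirc : ∀ τ : ℂ, ‖τ‖ = ε → 1 + δ * (lam - κ * M - 4 * κ ^ 2 * M ^ 2 - δ * C ^ 2) ≤
      (inner ℂ (F q) (F (q + τ • v)) : ℂ).re := by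
    intro τ hτ
    set x := q + τ • v with hx
    set c := ((s⁻¹ : ℝ) : ℂ) • x with hc
    have hPx : ‖P x‖ ^ 2 = s ^ 2 := by
      rw [hx, map_add, map_smul, norm_add_sq (𝕜 := ℂ), inner_smul_right, hperp, norm_smul, hq, hPv1,
        hτ, hs2]
      simp
    have hPx' : ‖P x‖ = s := by
      rw [← abs_of_nonneg (norm_nonneg (P x)), ← abs_of_nonneg hs0]
      exact (sq_eq_sq_iff_abs_eq_abs _ _).1 hPx
    have hPc : ‖P c‖ = 1 := by
      rw [hc, map_smul, norm_smul, hPx', Complex.norm_real, Real.norm_of_nonneg hsi0.le, hsi]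
    have hFc := hFQ c hPc
    have hxn : ‖x‖ ≤ M := by
      calc ‖x‖ ≤ ‖q‖ + ‖τ • v‖ := norm_add_le _ _
        _ ≤ M := by rw [norm_smul, hτ, hM]; nlinarith [norm_nonneg v]
    have hxc : x - c = (δ : ℂ) • x := by
      rw [hc, hδ, ofReal_sub, sub_smul, ofReal_one, one_smul]
    have hcq : c - q = -((δ : ℂ) • q) + ((s⁻¹ : ℝ) : ℂ) • (τ • v) := by
      rw [hc, hx, smul_add, hδ, ofReal_sub, sub_smul, ofReal_one, one_smul]; abel
    have hxq : ‖x - q‖ ≤ ε * M := by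
      rw [hx, add_sub_cancel_left, norm_smul, hτ, hM]
      nlinarith [norm_nonneg q]
    have hcqn : ‖c - q‖ ≤ ε * M := by
      rw [hcq]
      refine (norm_add_le _ _).trans ?_
      rw [norm_neg, norm_smul, norm_smul, norm_smul, Complex.norm_real, Complex.norm_real, hτ,
        Real.norm_of_nonneg hδ0.le, Real.norm_of_nonneg hsi0.le, hM, mul_add]
      have h1 : δ * ‖q‖ ≤ ε * ‖q‖ := by gcongr
      have h2 : s⁻¹ * (ε * ‖v‖) ≤ 1 * (ε * ‖v‖) := by gcongr
      linarith
    have e1 := hest x c (hxq.trans_lt hε2) (hcqn.trans_lt hε2)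
    have e2 := hest c q (hcqn.trans_lt hε2) (by simpa using hr)
    have hAx : A x = A q := by rw [hx, map_add, map_smul, hv]; simp
    rw [hxc, map_smul, hAx, norm_smul, Complex.norm_real, Real.norm_of_nonneg hδ0.le] at e1
    have e1' : ‖F x - F c - (δ : ℂ) • A q‖ ≤ κ * (δ * M) := e1.trans (by gcongr)
    have hAc : A (c - q) = -((δ : ℂ) • A q) := by
      rw [hcq, map_add, map_neg, map_smul, map_smul, map_smul, hv]; simp
    rw [hAc, sub_neg_eq_add] at e2
    have e3 : ‖F c - F q‖ ≤ δ * C + κ * (ε * M) := by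
      have h1 : F c - F q = (F c - F q + (δ : ℂ) • A q) - (δ : ℂ) • A q := by abel
      rw [h1]
      refine (norm_sub_le _ _).trans ?_
      rw [norm_smul, Complex.norm_real, Real.norm_of_nonneg hδ0.le]
      have : κ * ‖c - q‖ ≤ κ * (ε * M) := by gcongr
      linarith
    have e4 : (inner ℂ (F q) (F c) : ℂ).re = 1 - ‖F c - F q‖ ^ 2 / 2 := by
      have := norm_sub_sq (𝕜 := ℂ) (F q) (F c)
      rw [hFq, hFc, norm_sub_rev] at this
      have h2 : RCLike.re (inner ℂ (F q) (F c) : ℂ) = (inner ℂ (F q) (F c) : ℂ).re := rfl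
      rw [h2] at this
      linarith
    have e5 : ‖F c - F q‖ ^ 2 / 2 ≤ δ ^ 2 * C ^ 2 + κ ^ 2 * M ^ 2 * (4 * δ) := by
      have h1 : ‖F c - F q‖ ^ 2 ≤ (δ * C + κ * (ε * M)) ^ 2 := by gcongr
      have h2 : (δ * C + κ * (ε * M)) ^ 2 ≤ 2 * (δ * C) ^ 2 + 2 * (κ * (ε * M)) ^ 2 := by
        nlinarith [sq_nonneg (δ * C - κ * (ε * M))]
      have h3 : κ ^ 2 * M ^ 2 * ε ^ 2 ≤ κ ^ 2 * M ^ 2 * (4 * δ) := by gcongr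
      nlinarith
    have e6 : (inner ℂ (F q) (F x) : ℂ).re = (inner ℂ (F q) (F c) : ℂ).re + δ * lam
        + (inner ℂ (F q) (F x - F c - (δ : ℂ) • A q) : ℂ).re := by
      rw [inner_sub_right, inner_sub_right, inner_smul_right, Complex.sub_re, Complex.sub_re,
        Complex.re_ofReal_mul]
      ring
    have e7 : -(κ * (δ * M)) ≤ (inner ℂ (F q) (F x - F c - (δ : ℂ) • A q) : ℂ).re := by
      have := re_inner_le (z := -(F x - F c - (δ : ℂ) • A q)) hFq
      rw [inner_neg_right, norm_neg, Complex.neg_re] at this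
      linarith
    rw [e6, e4]
    nlinarith
  -- maximum principle
  have hmid : 0 < lam - κ * M - 4 * κ ^ 2 * M ^ 2 - δ * C ^ 2 := by
    have : δ * C ^ 2 ≤ ε * C ^ 2 := by gcongr
    linarith
  set h : ℂ → ℂ := fun τ => exp (-(inner ℂ (F q) (F (q + τ • v)))) with hh
  have hd : DifferentiableOn ℂ h (closedBall 0 ε) := by
    intro τ hτ
    apply DifferentiableAt.differentiableWithinAt
    have hτ' : ‖τ‖ ≤ ε := by simpa using hτ
    have h1 : q + τ • v ∈ U := by
      apply hinU
      rw [add_sub_cancel_left, norm_smul]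
      refine lt_of_le_of_lt ?_ hε2
      rw [hM]
      have : ‖τ‖ * ‖v‖ ≤ ε * ‖v‖ := by gcongr
      nlinarith [norm_nonneg q]
    have h2 : DifferentiableAt ℂ (fun τ : ℂ => F (q + τ • v)) τ :=
      DifferentiableAt.comp (g := F) τ (hFU.differentiableAt (hU.mem_nhds h1)) (by fun_prop)
    have h3 : DifferentiableAt ℂ (fun τ : ℂ => innerSL ℂ (F q) (F (q + τ • v))) τ :=
      (innerSL ℂ (F q)).differentiableAt.comp τ h2
    exact h3.neg.cexp
  have hdc : DiffContOnCl ℂ h (ball 0 ε) := by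
    rw [← closure_ball _ hε0.ne'] at hd
    exact hd.diffContOnCl
  have := Complex.norm_le_of_forall_mem_frontier_norm_le isBounded_ball hdc
    (C := Real.exp (-(1 + δ * (lam - κ * M - 4 * κ ^ 2 * M ^ 2 - δ * C ^ 2)))) (z := 0) (by
      intro z hz
      rw [frontier_ball _ hε0.ne'] at hz
      rw [hh, Complex.norm_exp, Real.exp_le_exp, Complex.neg_re]
      exact neg_le_neg (hcirc z (by simpa using hz))) (subset_closure (mem_ball_self hε0))
  rw [hh, Complex.norm_exp, Real.exp_le_exp, Complex.neg_re] at this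
  simp only [zero_smul, add_zero, inner_self_one hFq, Complex.one_re] at this
  have h9 := mul_pos hδ0 hmid
  linarith

theorem outer {P : X →L[ℂ] E} {F : X → E} {A : X →L[ℂ] E} {q : X}
    (hF : HasStrictFDerivAt F A q)
    (hq : ‖P q‖ = 1)
    (hFQ : ∀ x, ‖P x‖ = 1 → ‖F x‖ = 1)
    (hpos : 0 < (inner ℂ (F q) (A q) : ℂ).re) : ∀ᶠ x in 𝓝 q, 1 < ‖P x‖ → 1 < ‖F x‖ := by
  set lam := (inner ℂ (F q) (A q) : ℂ).re with hlam
  obtain ⟨κ, hκ0, hκ⟩ : ∃ κ : ℝ, 0 < κ ∧ κ * ‖q‖ < lam := by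
    have hc : ContinuousAt (fun κ : ℝ => κ * ‖q‖) 0 := by fun_prop
    have h1 : ∀ᶠ κ in 𝓝 (0 : ℝ), κ * ‖q‖ < lam :=
      hc.eventually (gt_mem_nhds (by simp; exact hpos))
    have h2 : ∀ᶠ κ in 𝓝[>] (0 : ℝ), 0 < κ ∧ κ * ‖q‖ < lam :=
      eventually_mem_nhdsWithin.and (nhdsWithin_le_nhds h1)
    exact h2.exists
  have hstr := hF.isLittleO.bound hκ0
  set c : X → X := fun x => ((‖P x‖⁻¹ : ℝ) : ℂ) • x with hc
  have hcc : ContinuousAt c q := by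
    have h1 : ContinuousAt (fun x => ‖P x‖⁻¹) q :=
      ContinuousAt.inv₀ (by fun_prop) (by rw [hq]; norm_num)
    have h2 : ContinuousAt (fun x => ((‖P x‖⁻¹ : ℝ) : ℂ)) q :=
      Complex.continuous_ofReal.continuousAt.comp h1
    exact h2.smul continuousAt_id
  have hcq : c q = q := by simp [hc, hq]
  have hpair : Tendsto (fun x => (x, c x)) (𝓝 q) (𝓝 (q, q)) := by
    have : ContinuousAt (fun x => (x, c x)) q := continuousAt_id.prodMk hcc
    have h2 := this.tendsto
    rwa [hcq] at h2
  have e1 := hpair.eventually hstr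
  have e2 : ∀ᶠ x in 𝓝 q, 0 < (inner ℂ (F (c x)) (A x) : ℂ).re - κ * ‖x‖ := by
    have hFc : ContinuousAt (fun x => F (c x)) q :=
      ContinuousAt.comp (g := F) (by rw [hcq]; exact hF.hasFDerivAt.continuousAt) hcc
    have h1 : ContinuousAt (fun x => (inner ℂ (F (c x)) (A x) : ℂ)) q :=
      hFc.inner A.continuous.continuousAt
    have h2 : ContinuousAt (fun x => (inner ℂ (F (c x)) (A x) : ℂ).re - κ * ‖x‖) q :=
      (Complex.continuous_re.continuousAt.comp h1).sub (by fun_prop)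
    apply h2.eventually (lt_mem_nhds _)
    change 0 < (inner ℂ (F (c q)) (A q) : ℂ).re - κ * ‖q‖
    rw [hcq]
    linarith
  filter_upwards [e1, e2] with x h1 h2 h3
  set s := ‖P x‖ with hs
  have hs0 : 0 < s := by linarith
  have hPc : ‖P (c x)‖ = 1 := by
    simp only [hc]
    rw [map_smul, norm_smul, Complex.norm_real, norm_inv, norm_norm, ← hs, inv_mul_cancel₀ hs0.ne']
  have hFc := hFQ _ hPc
  set δ : ℝ := 1 - s⁻¹ with hδ
  have hδ0 : 0 < δ := sub_pos.2 (inv_lt_one_of_one_lt₀ h3)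
  have hxc : x - c x = (δ : ℂ) • x := by
    simp only [hc]
    rw [hδ, ofReal_sub, sub_smul, ofReal_one, one_smul]
  rw [hxc, map_smul, norm_smul, Complex.norm_real, Real.norm_of_nonneg hδ0.le] at h1
  have e6 : (inner ℂ (F (c x)) (F x) : ℂ).re = 1 + δ * (inner ℂ (F (c x)) (A x) : ℂ).re
      + (inner ℂ (F (c x)) (F x - F (c x) - (δ : ℂ) • A x) : ℂ).re := by
    rw [inner_sub_right, inner_sub_right, inner_smul_right, Complex.sub_re, Complex.sub_re,
      Complex.re_ofReal_mul, inner_self_one hFc, Complex.one_re]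
    ring
  have e7 := re_inner_le (z := -(F x - F (c x) - (δ : ℂ) • A x)) hFc
  rw [inner_neg_right, norm_neg, Complex.neg_re] at e7
  have e8 := re_inner_le (z := F x) hFc
  have e9 := mul_pos hδ0 h2
  nlinarith

end Levi



section LocalInverse
open Metric Set Filter Topology

variable {X : Type*} [NormedAddCommGroup X] [NormedSpace ℂ X] [FiniteDimensional ℂ X]
variable {E : Type*} [NormedAddCommGroup E] [InnerProductSpace ℂ E] [FiniteDimensional ℂ E]

theorem liouville_fibre {P : X →L[ℂ] E} {f : X → X} {U : Set X} (hU : IsOpen U)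
    (hQU : {x | ‖P x‖ = 1} ⊆ U) (hf : DifferentiableOn ℂ f U)
    (hmaps : ∀ q, ‖P q‖ = 1 → ‖P (f q)‖ = 1) {q : X} (hq : ‖P q‖ = 1) {k : X} (hk : P k = 0) :
    P (f (q + k)) = P (f q) := by
  have hQ : ∀ τ : ℂ, ‖P (q + τ • k)‖ = 1 := by intro τ; simp [hk, hq]
  have hd : Differentiable ℂ (fun τ : ℂ => P (f (q + τ • k))) := by
    intro τ
    have h1 : DifferentiableAt ℂ (fun τ : ℂ => f (q + τ • k)) τ :=
      DifferentiableAt.comp (g := f) τ (hf.differentiableAt (hU.mem_nhds (hQU (hQ τ)))) (by fun_prop)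
    exact P.differentiableAt.comp τ h1
  have hb : Bornology.IsBounded (range (fun τ : ℂ => P (f (q + τ • k)))) := by
    refine isBounded_iff_forall_norm_le.2 ⟨1, ?_⟩
    rintro _ ⟨τ, rfl⟩
    exact (hmaps _ (hQ τ)).le
  have := hd.apply_eq_apply_of_bounded hb 1 0
  simpa using this

theorem fibre_inj {P : X →L[ℂ] E} (hP : Function.Surjective P) {f : X → X} {U : Set X} (hU : IsOpen U)
    (hQU : {x | ‖P x‖ = 1} ⊆ U) (hf : DifferentiableOn ℂ f U)
    (hmaps : ∀ q, ‖P q‖ = 1 → ‖P (f q)‖ = 1)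
    (hinj : InjOn f {x | ‖P x‖ = 1}) {q : X} (hq : ‖P q‖ = 1) {v : X} (hv : P v = 0)
    (hfv : fderiv ℂ f q v = 0) : v = 0 := by
  obtain ⟨R, hR⟩ := LinearMap.exists_rightInverse_of_surjective P.toLinearMap
    (LinearMap.range_eq_top.2 hP)
  have hR' : ∀ y, P (R y) = y := fun y => LinearMap.congr_fun hR y
  set K := LinearMap.ker P.toLinearMap with hK
  set π : X →L[ℂ] K := (ContinuousLinearMap.id ℂ X -
    (LinearMap.toContinuousLinearMap R).comp P).codRestrict K (by
      intro x
      simp [hK, hR']) with hπ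
  have hπv : ∀ x, (π x : X) = x - R (P x) := fun x => rfl
  have hKQ : ∀ κ : K, ‖P (q + κ)‖ = 1 := by
    intro κ
    have : P (κ : X) = 0 := κ.2
    rw [map_add, this, add_zero, hq]
  set φ : K → K := fun κ => π (f (q + κ)) with hφ
  have hder : ∀ κ : K, HasFDerivAt φ (π.comp ((fderiv ℂ f (q + κ)).comp K.subtypeL)) κ := by
    intro κ
    have h1 := (hf.differentiableAt (hU.mem_nhds (hQU (hKQ κ)))).hasFDerivAt
    have h2 : HasFDerivAt (fun κ : K => q + (κ : X)) K.subtypeL κ :=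
      K.subtypeL.hasFDerivAt.const_add q
    have h3 : HasFDerivAt (fun κ : K => f (q + (κ : X))) ((fderiv ℂ f (q + κ)).comp K.subtypeL) κ :=
      HasFDerivAt.comp (g := f) κ h1 h2
    exact π.hasFDerivAt.comp κ h3
  have hφinj : InjOn φ univ := by
    intro a _ b _ hab
    have h1 : (φ a : X) = φ b := by rw [hab]
    have ea := liouville_fibre hU hQU hf hmaps hq (k := a) a.2
    have eb := liouville_fibre hU hQU hf hmaps hq (k := b) b.2
    simp only [hφ, hπv, ea, eb, sub_left_inj] at h1
    have := hinj (hKQ a) (hKQ b) h1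
    exact Subtype.ext (add_left_cancel this)
  have := osgood_full (Module.finrank ℂ K) K K rfl rfl φ univ isOpen_univ
    (fun κ _ => (hder κ).differentiableAt.differentiableWithinAt) hφinj 0 trivial ⟨v, hv⟩ (by
      rw [(hder 0).fderiv]
      simp [hfv])
  exact congrArg Subtype.val this

theorem local_inverse {P : X →L[ℂ] E} (hP : Function.Surjective P) 
    {f g : X → X} {U : Set X} (hU : IsOpen U)
    (hQU : {x | ‖P x‖ = 1} ⊆ U) (hf : DifferentiableOn ℂ f U)
    (hg : DifferentiableOn ℂ g {x | ‖P x‖ < 1})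
    (hgf : ∀ q, ‖P q‖ = 1 → ∀ᶠ x in 𝓝[{x | ‖P x‖ < 1}] q, g x = f x)
    (hgB : ∀ x, ‖P x‖ < 1 → ‖P (g x)‖ < 1)
    (hmaps : ∀ q, ‖P q‖ = 1 → ‖P (f q)‖ = 1)
    (hinj : InjOn f {x | ‖P x‖ = 1}) {q : X} (hq : ‖P q‖ = 1) :
    ∃ ψ : X → X, ψ (f q) = q ∧ (∀ᶠ x in 𝓝 q, ψ (f x) = x) ∧
      ∀ᶠ y in 𝓝 (f q), DifferentiableAt ℂ ψ y ∧ f (ψ y) = y ∧ (‖P y‖ = 1 → ‖P (ψ y)‖ = 1) := by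
  have : CompleteSpace X := FiniteDimensional.complete ℂ X
  have hqU : q ∈ U := hQU hq
  have hstr := holo_hasStrict hU hf hqU
  have hFstr : HasStrictFDerivAt (fun x => P (f x)) (P.comp (fderiv ℂ f q)) q :=
    P.hasStrictFDerivAt.comp q hstr
  have hpos : 0 < (inner ℂ (P (f q)) ((P.comp (fderiv ℂ f q)) q) : ℂ).re :=
    hopf hU hQU hf hg hgf hmaps hgB hq
  have hFB : ∀ᶠ x in 𝓝 q, ‖P x‖ < 1 → ‖P (f x)‖ < 1 := by
    filter_upwards [eventually_nhdsWithin_iff.1 (hgf q hq)] with x hx h1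
    rw [← hx h1]; exact hgB x h1
  have hinjd : Function.Injective (fderiv ℂ f q) := by
    rw [injective_iff_map_eq_zero]
    intro v hv
    refine fibre_inj hP hU hQU hf hmaps hinj hq ?_ hv
    exact levi (F := fun x => P (f x)) hU hqU (P.differentiable.comp_differentiableOn hf) hFstr hq
      (hmaps q hq) hFB hmaps hpos (by simp [hv])
  set L : X ≃L[ℂ] X := (LinearEquiv.ofInjectiveEndo (fderiv ℂ f q).toLinearMap hinjd).toContinuousLinearEquiv
    with hL
  have hfd : HasFDerivAt f (L : X →L[ℂ] X) q := by
    have : (L : X →L[ℂ] X) = fderiv ℂ f q := by ext x; rfl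
    rw [this]; exact hstr.hasFDerivAt
  have hfc := holo_contDiffAt hU hf hqU
  set Φ := hfc.toOpenPartialHomeomorph f hfd one_ne_zero with hΦ
  have hΦc : (Φ : X → X) = f := rfl
  have hqs : q ∈ Φ.source := hfc.mem_toOpenPartialHomeomorph_source hfd one_ne_zero
  set ψ := hfc.localInverse hfd one_ne_zero with hψ
  have hψΦ : ψ = Φ.symm := rfl
  have hψc : ContDiffAt ℂ 1 ψ (f q) := hfc.to_localInverse hfd one_ne_zero
  have hψq : ψ (f q) = q := by
    rw [hψΦ, ← hΦc]; exact Φ.left_inv hqs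
  refine ⟨ψ, hψq, ?_, ?_⟩
  · filter_upwards [Φ.open_source.mem_nhds hqs] with x hx
    exact Φ.left_inv hx
  have h1 : ∀ᶠ y in 𝓝 (f q), f (ψ y) = y :=
    Φ.eventually_right_inverse (x := f q) (by rw [← hΦc]; exact Φ.map_source hqs)
  have h3 : ∀ᶠ y in 𝓝 (f q), DifferentiableAt ℂ ψ y := by
    filter_upwards [hψc.eventually (by simp)] with y hy
    exact hy.differentiableAt one_ne_zero
  have hout := outer (F := fun x => P (f x)) hFstr hq hmaps hpos
  have hten : Tendsto ψ (𝓝 (f q)) (𝓝 q) := by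
    have := hψc.continuousAt.tendsto
    rwa [hψq] at this
  filter_upwards [h1, h3, hten.eventually hFB, hten.eventually hout] with y e1 e2 e3 e4
  refine ⟨e2, e1, fun hy => ?_⟩
  rw [e1, hy] at e3 e4
  rcases lt_trichotomy ‖P (ψ y)‖ 1 with h | h | h
  · exact absurd (e3 h) (lt_irrefl _)
  · exact h
  · exact absurd (e4 h) (lt_irrefl _)

end LocalInverse



section Assembly
open Metric Set Filter Topology

variable {X : Type*} [NormedAddCommGroup X] [NormedSpace ℂ X] [FiniteDimensional ℂ X]
variable {E : Type*} [NormedAddCommGroup E] [InnerProductSpace ℂ E] [FiniteDimensional ℂ E]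

theorem glue_inverse {P : X →L[ℂ] E} (hP : Function.Surjective P)
    {f g : X → X} {U : Set X} (hU : IsOpen U)
    (hQU : {x | ‖P x‖ = 1} ⊆ U) (hf : DifferentiableOn ℂ f U)
    (hg : DifferentiableOn ℂ g {x | ‖P x‖ < 1})
    (hgf : ∀ q, ‖P q‖ = 1 → ∀ᶠ x in 𝓝[{x | ‖P x‖ < 1}] q, g x = f x)
    (hgB : ∀ x, ‖P x‖ < 1 → ‖P (g x)‖ < 1)
    (hmaps : ∀ q, ‖P q‖ = 1 → ‖P (f q)‖ = 1)
    (hinj : InjOn f {x | ‖P x‖ = 1})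
    (hsurj : ∀ y, ‖P y‖ = 1 → ∃ q, ‖P q‖ = 1 ∧ f q = y) :
    ∃ (h : X → X) (W : Set X), IsOpen W ∧ {x | ‖P x‖ = 1} ⊆ W ∧ DifferentiableOn ℂ h W ∧
      (∀ y ∈ W, f (h y) = y) ∧ (∀ y, ‖P y‖ = 1 → ‖P (h y)‖ = 1) ∧
      (∀ q, ‖P q‖ = 1 → ∀ᶠ x in 𝓝 q, h (f x) = x) := by
  have : CompleteSpace X := FiniteDimensional.complete ℂ X
  have hex : ∀ y : X, ∃ (q : X) (ψ : X → X) (δ : ℝ), ‖P y‖ = 1 → (‖P q‖ = 1 ∧ f q = y ∧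
      ψ y = q ∧ (∀ᶠ x in 𝓝 q, ψ (f x) = x) ∧ 0 < δ ∧
      ∀ z ∈ ball y δ, DifferentiableAt ℂ ψ z ∧ f (ψ z) = z ∧ (‖P z‖ = 1 → ‖P (ψ z)‖ = 1)) := by
    intro y
    by_cases hy : ‖P y‖ = 1
    · obtain ⟨q, hq, hfq⟩ := hsurj y hy
      obtain ⟨ψ, h1, h2, h3⟩ := local_inverse hP hU hQU hf hg hgf hgB hmaps hinj hq
      rw [hfq] at h1 h3
      obtain ⟨δ, hδ, hball⟩ := Metric.eventually_nhds_iff_ball.1 h3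
      exact ⟨q, ψ, δ, fun _ => ⟨hq, hfq, h1, h2, hδ, hball⟩⟩
    · exact ⟨0, id, 0, fun h => absurd h hy⟩
  choose q ψ δ H using hex
  have hcompat : ∀ y y', ‖P y‖ = 1 → ‖P y'‖ = 1 → y' ∈ ball y (δ y) →
      EqOn (ψ y) (ψ y') (ball y (δ y) ∩ ball y' (δ y')) := by
    intro y y' hy hy' hmem
    obtain ⟨a1, a2, a3, a4, a5, a6⟩ := H y hy
    obtain ⟨b1, b2, b3, b4, b5, b6⟩ := H y' hy'
    obtain ⟨c1, c2, c3⟩ := a6 y' hmem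
    have hp : ψ y y' = q y' := hinj (c3 hy') b1 (by rw [c2, b2])
    refine holo_identity (isOpen_ball.inter isOpen_ball) ((convex_ball _ _).inter (convex_ball _ _))
      (fun z hz => (a6 z hz.1).1.differentiableWithinAt)
      (fun z hz => (b6 z hz.2).1.differentiableWithinAt) ⟨hmem, mem_ball_self b5⟩ ?_
    have hten : Tendsto (ψ y) (𝓝 y') (𝓝 (q y')) := by
      have := c1.continuousAt.tendsto
      rwa [hp] at this
    filter_upwards [hten.eventually b4, isOpen_ball.mem_nhds hmem] with z h1 h2
    rw [(a6 z h2).2.1] at h1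
    exact h1.symm
  have hcompat2 : ∀ y y' x, ‖P y‖ = 1 → ‖P y'‖ = 1 → x ∈ ball y (δ y / 3) → x ∈ ball y' (δ y' / 3) →
      ψ y x = ψ y' x := by
    intro y y' x hy hy' hx hx'
    have hδ := (H y hy).2.2.2.2.1
    have hδ' := (H y' hy').2.2.2.2.1
    rw [mem_ball] at hx hx'
    have hd : dist y' y < (δ y + δ y') / 3 := by
      have := dist_triangle y' x y
      rw [dist_comm y' x] at this
      linarith
    have m1 : x ∈ ball y (δ y) := by rw [mem_ball]; linarith
    have m2 : x ∈ ball y' (δ y') := by rw [mem_ball]; linarith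
    rcases le_total (δ y') (δ y) with hle | hle
    · exact hcompat y y' hy hy' (by rw [mem_ball]; linarith) ⟨m1, m2⟩
    · exact (hcompat y' y hy' hy (by rw [mem_ball, dist_comm]; linarith) ⟨m2, m1⟩).symm
  classical
  set h : X → X := fun x => if hx : ∃ y, ‖P y‖ = 1 ∧ x ∈ ball y (δ y / 3) then ψ hx.choose x else 0
    with hh
  have hloc : ∀ y, ‖P y‖ = 1 → ∀ x ∈ ball y (δ y / 3), h x = ψ y x := by
    intro y hy x hx
    have hex : ∃ y, ‖P y‖ = 1 ∧ x ∈ ball y (δ y / 3) := ⟨y, hy, hx⟩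
    simp only [hh, dif_pos hex]
    exact hcompat2 _ y x hex.choose_spec.1 hy hex.choose_spec.2 hx
  have hsmall : ∀ y, ‖P y‖ = 1 → ball y (δ y / 3) ⊆ ball y (δ y) := fun y hy =>
    ball_subset_ball (by linarith [(H y hy).2.2.2.2.1])
  have hself : ∀ y, ‖P y‖ = 1 → y ∈ ball y (δ y / 3) := fun y hy =>
    mem_ball_self (by linarith [(H y hy).2.2.2.2.1])
  refine ⟨h, {x | ∃ y, ‖P y‖ = 1 ∧ x ∈ ball y (δ y / 3)}, ?_, ?_, ?_, ?_, ?_, ?_⟩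
  · rw [isOpen_iff_mem_nhds]
    rintro x ⟨y, hy, hx⟩
    filter_upwards [isOpen_ball.mem_nhds hx] with z hz
    exact ⟨y, hy, hz⟩
  · intro y hy
    exact ⟨y, hy, hself y hy⟩
  · rintro x ⟨y, hy, hx⟩
    apply DifferentiableAt.differentiableWithinAt
    refine (((H y hy).2.2.2.2.2 x (hsmall y hy hx)).1).congr_of_eventuallyEq ?_
    filter_upwards [isOpen_ball.mem_nhds hx] with z hz
    exact hloc y hy z hz
  · rintro x ⟨y, hy, hx⟩
    rw [hloc y hy x hx]
    exact ((H y hy).2.2.2.2.2 x (hsmall y hy hx)).2.1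
  · intro y hy
    rw [hloc y hy y (hself y hy), (H y hy).2.2.1]
    exact (H y hy).1
  · intro p hp
    have hfp := hmaps p hp
    have hqp : q (f p) = p := hinj (H (f p) hfp).1 hp (H (f p) hfp).2.1
    have h1 := (H (f p) hfp).2.2.2.1
    rw [hqp] at h1
    have h2 : ∀ᶠ x in 𝓝 p, f x ∈ ball (f p) (δ (f p) / 3) :=
      (hf.differentiableAt (hU.mem_nhds (hQU hp))).continuousAt.eventually_mem
        (isOpen_ball.mem_nhds (hself _ hfp))
    filter_upwards [h1, h2] with x e1 e2
    rw [hloc _ hfp _ e2, e1]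

theorem comp_id_of {P : X →L[ℂ] E} {f g h G : X → X}
    (hg : DifferentiableOn ℂ g {x | ‖P x‖ < 1}) (hG : DifferentiableOn ℂ G {x | ‖P x‖ < 1})
    (hgB : ∀ x, ‖P x‖ < 1 → ‖P (g x)‖ < 1)
    {q : X} (hq : ‖P q‖ = 1) (hfc : ContinuousAt f q)
    (hgf : ∀ᶠ x in 𝓝[{x | ‖P x‖ < 1}] q, g x = f x)
    (hGh : ∀ᶠ x in 𝓝[{x | ‖P x‖ < 1}] (f q), G x = h x)
    (hid : ∀ᶠ x in 𝓝 q, h (f x) = x) : ∀ x, ‖P x‖ < 1 → G (g x) = x := by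
  have : CompleteSpace X := FiniteDimensional.complete ℂ X
  set B := {x | ‖P x‖ < 1} with hB
  have hten : Tendsto f (𝓝[B] q) (𝓝[B] (f q)) := by
    refine tendsto_nhdsWithin_iff.2 ⟨hfc.tendsto.mono_left nhdsWithin_le_nhds, ?_⟩
    filter_upwards [hgf, self_mem_nhdsWithin] with x h1 h2
    rw [← h1]; exact hgB x h2
  have hev : ∀ᶠ x in 𝓝[B] q, G (g x) = x := by
    filter_upwards [hgf, hten.eventually hGh, nhdsWithin_le_nhds hid] with x h1 h2 h3
    rw [h1, h2, h3]
  have := Q_closure P hq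
  obtain ⟨c, hc1, hc2⟩ := ((eventually_eventually_nhdsWithin.2 hev).and
    eventually_mem_nhdsWithin).exists
  rw [(Bopen P).nhdsWithin_eq hc2] at hc1
  intro x hx
  exact holo_identity (f := fun x => G (g x)) (g := fun x => x) (Bopen P) (Bconv P)
    (hG.comp hg (fun x hx => hgB x hx)) differentiableOn_id hc2 hc1 hx

theorem main_abstract {P : X →L[ℂ] E} (hP : Function.Surjective P) (hE : 1 < Module.finrank ℂ E)
    {f : X → X} {U : Set X} (hU : IsOpen U)
    (hQU : {x | ‖P x‖ = 1} ⊆ U) (hf : DifferentiableOn ℂ f U)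
    (hbij : BijOn f {x | ‖P x‖ = 1} {x | ‖P x‖ = 1}) :
    ∃ (g : X → X) (U' : Set X), IsOpen U' ∧ {x | ‖P x‖ = 1} ⊆ U' ∧ U' ⊆ U ∧
      DifferentiableOn ℂ g {x | ‖P x‖ < 1} ∧ BijOn g {x | ‖P x‖ < 1} {x | ‖P x‖ < 1} ∧
      EqOn g f ({x | ‖P x‖ < 1} ∩ U') := by
  have : CompleteSpace X := FiniteDimensional.complete ℂ X
  have hn : Nontrivial E := Module.nontrivial_of_finrank_pos (R := ℂ) (by omega)
  have hmaps : ∀ q, ‖P q‖ = 1 → ‖P (f q)‖ = 1 := fun q hq => hbij.mapsTo hq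
  have hinj := hbij.injOn
  have hsurj : ∀ y, ‖P y‖ = 1 → ∃ q, ‖P q‖ = 1 ∧ f q = y := fun y hy => hbij.surjOn hy
  obtain ⟨g, hg, hgf⟩ := hartogs P hP hE hU hQU hf
  have hgB : ∀ x, ‖P x‖ < 1 → ‖P (g x)‖ < 1 := fun x hx =>
    g_mapsTo hP hU hQU hf hg hgf hmaps hsurj hx
  obtain ⟨h, W, hW, hQW, hh, hfh, hhmaps, hhf⟩ :=
    glue_inverse hP hU hQU hf hg hgf hgB hmaps hinj hsurj
  obtain ⟨G, hG, hGh⟩ := hartogs P hP hE hW hQW hh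
  have hGB : ∀ x, ‖P x‖ < 1 → ‖P (G x)‖ < 1 := fun x hx =>
    g_mapsTo hP hW hQW hh hG hGh hhmaps
      (fun y hy => ⟨f y, hmaps y hy, (hhf y hy).self_of_nhds⟩) hx
  obtain ⟨e, he⟩ := exists_norm_eq E (zero_le_one)
  obtain ⟨q, hPq⟩ := hP e
  have hq : ‖P q‖ = 1 := by rw [hPq, he]
  have hGg := comp_id_of hg hG hgB hq (hf.differentiableAt (hU.mem_nhds (hQU hq))).continuousAt
    (hgf q hq) (hGh _ (hmaps q hq)) (hhf q hq)
  have hgG := comp_id_of hG hg hGB hq (hh.differentiableAt (hW.mem_nhds (hQW hq))).continuousAt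
    (hGh q hq) (hgf _ (hhmaps q hq)) (by
      filter_upwards [hW.mem_nhds (hQW hq)] with x hx
      exact hfh x hx)
  refine ⟨g, U ∩ {x | ∀ᶠ y in 𝓝 x, ‖P y‖ < 1 → g y = f y}, hU.inter isOpen_setOf_eventually_nhds,
    ?_, inter_subset_left, hg, ⟨?_, ?_, ?_⟩, ?_⟩
  · intro x hx
    exact ⟨hQU hx, eventually_nhdsWithin_iff.1 (hgf x hx)⟩
  · exact fun x hx => hgB x hx
  · intro a ha b hb hab
    rw [← hGg a ha, ← hGg b hb, hab]
  · intro y hy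
    exact ⟨G y, hGB y hy, hgG y hy⟩
  · rintro x ⟨hx, -, hx2⟩
    have hx3 : ∀ᶠ y in 𝓝 x, ‖P y‖ < 1 → g y = f y := hx2
    exact hx3.self_of_nhds hx

end Assembly

section Concrete

/-- the coordinate projection onto the Hermitian part -/
noncomputable def Pmap (n m : ℕ) :
    ((Fin n → ℂ) × ℂ) →L[ℂ] EuclideanSpace ℂ (Option {j : Fin n // (j : ℕ) < m}) :=
  LinearMap.toContinuousLinearMap
    { toFun := fun p => WithLp.toLp 2 (fun o => o.elim p.2 (fun j => p.1 j.1))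
      map_add' := by
        intro p p'
        ext o
        cases o <;> simp
      map_smul' := by
        intro c p
        ext o
        cases o <;> simp }

theorem Pmap_apply (n m : ℕ) (p : (Fin n → ℂ) × ℂ) (o : Option {j : Fin n // (j : ℕ) < m}) :
    Pmap n m p o = o.elim p.2 (fun j => p.1 j.1) := rfl

theorem Pmap_norm (n m : ℕ) (p : (Fin n → ℂ) × ℂ) :
    (∑ j : Fin n, if (j : ℕ) < m then ‖p.1 j‖ ^ 2 else 0) + ‖p.2‖ ^ 2 = ‖Pmap n m p‖ ^ 2 := by
  rw [EuclideanSpace.norm_sq_eq, Fintype.sum_option, add_comm]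
  simp only [Pmap_apply, Option.elim_none, Option.elim_some]
  congr 1
  rw [← Finset.sum_filter]
  exact Finset.sum_subtype _ (by simp) _

theorem Pmap_surj (n m : ℕ) : Function.Surjective (Pmap n m) := by
  intro y
  refine ⟨(fun j => if h : (j : ℕ) < m then y (some ⟨j, h⟩) else 0, y none), ?_⟩
  ext o
  rw [Pmap_apply]
  rcases o with _ | ⟨j, hj⟩
  · rfl
  · simp [hj]

theorem Qset_eq (n m : ℕ) : Qset n m = {x | ‖Pmap n m x‖ = 1} := by
  ext p
  change _ = _ ↔ _ = _
  rw [Pmap_norm, pow_eq_one_iff_of_nonneg (norm_nonneg _) two_ne_zero]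

theorem Bset_eq (n m : ℕ) : Bset n m = {x | ‖Pmap n m x‖ < 1} := by
  ext p
  change (∑ j : Fin n, if (j : ℕ) < m then ‖p.1 j‖ ^ 2 else 0) + ‖p.2‖ ^ 2 < 1 ↔ ‖Pmap n m p‖ < 1
  rw [Pmap_norm, pow_lt_one_iff_of_nonneg (norm_nonneg _) two_ne_zero]

end Concrete


/-- if `f` is holomorphic on a neighbourhood `U` of
`𝒬 = ℂ^{n−m} × S^{2m+1}` (with `m ≥ 1`, so the sphere factor is strictly pseudoconvex,
its Levi form being positive definite) and maps `𝒬` bijectively onto itself, then `f`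
extends to a holomorphic automorphism of `ℬ = ℂ^{n−m} × B^{m+1}`: there is a
biholomorphic self-map `g` of `ℬ` agreeing with `f` near `𝒬`. -/
theorem stmt16 (n m : ℕ) (hm : 1 ≤ m) (hmn : m ≤ n)
    (f : (Fin n → ℂ) × ℂ → (Fin n → ℂ) × ℂ)
    (U : Set ((Fin n → ℂ) × ℂ)) (hUopen : IsOpen U) (hQU : Qset n m ⊆ U)
    (hf : DifferentiableOn ℂ f U)
    (hbij : Set.BijOn f (Qset n m) (Qset n m)) :
    ∃ (g : (Fin n → ℂ) × ℂ → (Fin n → ℂ) × ℂ) (U' : Set ((Fin n → ℂ) × ℂ)),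
      IsOpen U' ∧ Qset n m ⊆ U' ∧ U' ⊆ U ∧
      DifferentiableOn ℂ g (Bset n m) ∧
      Set.BijOn g (Bset n m) (Bset n m) ∧
      Set.EqOn g f (Bset n m ∩ U') := by
  rw [Qset_eq] at hQU hbij
  rw [Qset_eq, Bset_eq]
  have hE : 1 < Module.finrank ℂ (EuclideanSpace ℂ (Option {j : Fin n // (j : ℕ) < m})) := by
    rw [finrank_euclideanSpace, Fintype.card_option]
    have : 0 < Fintype.card {j : Fin n // (j : ℕ) < m} :=
      Fintype.card_pos_iff.2 ⟨⟨⟨0, by omega⟩, by show 0 < m; omega⟩⟩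
    omega
  exact main_abstract (Pmap_surj n m) hE hUopen hQU hf hbij
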